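/- arXiv:1901.00327 — 2 statements merged into one kernel-verified Lean document; each statement's English description precedes it below -/
import Mathlib

section
/- Let (X,T) be an invertible topological dynamical system with positive topological entropy h(X,T) > 0. Then (X,T) has a proper asymptotic pair. More precisely, for every T-ergodic Borel probability measure μ on X with h_μ(X,T) > 0, the set of points x ∈ X that belong to a proper asymptotic pair has μ-measure 1. -/
open MeasureTheory Filter Topology Set
open scoped symmDiff Classical ENNReal NNReal

section Defs

variable {X : Type*}

/-- The pair `(x, y)` is (positively) asymptotic for `T`. -/
def IsAsymptoticPair [PseudoMetricSpace X] (T : X → X) (x y : X) : Prop :=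
  Tendsto (fun n : ℕ => dist (T^[n] x) (T^[n] y)) atTop (𝓝 0)

/-- Shannon entropy of the finite measurable partition of `X` given by the fibers of a
map `p` into a finite type. -/
noncomputable def partEntropy [MeasurableSpace X] (μ : Measure X) {ι : Type*} [Fintype ι]
    (p : X → ι) : ℝ :=
  ∑ i : ι, Real.negMulLog (μ (p ⁻¹' {i})).toReal

/-- Conditional Shannon entropy `H(P | F)` of the finite partition given by the fibers
of `p` with respect to the sub-σ-algebra `F`:
`H(P|F) = ∑_{A ∈ P} ∫ -E(1_A|F) log E(1_A|F) dμ`. -/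
noncomputable def condPartEntropy [MeasurableSpace X] (μ : Measure X)
    (F : MeasurableSpace X) {ι : Type*} [Fintype ι] (p : X → ι) : ℝ :=
  ∑ i : ι, ∫ x, Real.negMulLog ((μ[(p ⁻¹' {i}).indicator (fun _ => (1 : ℝ)) | F]) x) ∂μ

/-- The σ-algebra `σ(P^-)` generated by the partitions `T^{-n}P`, `n ≥ 1`
(the "past" of the partition given by the fibers of `p`). -/
def partPast (T : X → X) {ι : Type*} (p : X → ι) : MeasurableSpace X :=
  ⨆ n : ℕ, MeasurableSpace.comap (fun x => p (T^[n + 1] x)) ⊤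

/-- The σ-algebra `σ(P^T)` generated by the partitions `T^{-n}P`, `n ∈ ℤ`, where `S = T⁻¹`. -/
def partHull (T S : X → X) {ι : Type*} (p : X → ι) : MeasurableSpace X :=
  ⨆ n : ℕ,
    MeasurableSpace.comap (fun x => p (T^[n] x)) ⊤ ⊔
      MeasurableSpace.comap (fun x => p (S^[n] x)) ⊤

/-- Kolmogorov–Sinai entropy of a finite partition: `h_μ(P, T) = H(P | P^-)`. -/
noncomputable def partKS [MeasurableSpace X] (μ : Measure X) (T : X → X) {ι : Type*}
    [Fintype ι] (p : X → ι) : ℝ :=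
  condPartEntropy μ (partPast T p) p

/-- Kolmogorov–Sinai (measure-theoretic) entropy `h_μ(X, T)` of the system:
the supremum over all finite measurable partitions `P` of `h_μ(P, T)`. -/
noncomputable def ksEntropy [MeasurableSpace X] (μ : Measure X) (T : X → X) : ℝ≥0∞ :=
  ⨆ (k : ℕ) (p : X → Fin k) (_ : Measurable p), ENNReal.ofReal (partKS μ T p)

/-- The Pinsker σ-algebra `Π_μ`: the σ-algebra generated by all finite measurable
partitions with zero Kolmogorov–Sinai entropy. -/
def pinskerAlg [MeasurableSpace X] (μ : Measure X) (T : X → X) : MeasurableSpace X :=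
  ⨆ (k : ℕ) (p : X → Fin k) (_ : Measurable p) (_ : partKS μ T p = 0),
    MeasurableSpace.comap p ⊤

/-- Minimal cardinality of a subcover of `⋁_{i=0}^{n-1} T^{-i} C`, where `C` is a
finite cover of `X`. -/
noncomputable def coverNum (T : X → X) {k : ℕ} (C : Fin k → Set X) (n : ℕ) : ℕ :=
  sInf {m : ℕ | ∃ f : Fin m → Fin n → Fin k,
    (⋃ j : Fin m, ⋂ i : Fin n, T^[(i : ℕ)] ⁻¹' C (f j i)) = Set.univ}

/-- Topological entropy of a finite cover `C`:
`h(C, T) = inf_n (1/n) log N(⋁_{i=0}^{n-1} T^{-i} C) = lim_n (1/n) log N(...)`. -/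
noncomputable def coverEntropyOf (T : X → X) {k : ℕ} (C : Fin k → Set X) : ℝ :=
  ⨅ n : ℕ, Real.log (coverNum T C (n + 1)) / (n + 1)

/-- `(x, y)` is a topological entropy pair: `x ≠ y` and every two-set open cover
`{Uᶜ, Vᶜ}`, where `U` and `V` are disjoint closed neighbourhoods of `x` and `y`,
has positive topological entropy. -/
def IsEntropyPair [TopologicalSpace X] (T : X → X) (x y : X) : Prop :=
  x ≠ y ∧ ∀ U V : Set X, IsClosed U → IsClosed V → U ∈ 𝓝 x → V ∈ 𝓝 y → Disjoint U V →
    0 < coverEntropyOf T ![Uᶜ, Vᶜ]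

/-- `(x, y)` is an entropy pair for the invariant measure `μ`: `x ≠ y` and every two-set
Borel partition `(A, Aᶜ)` with `x ∈ interior A` and `y ∈ interior Aᶜ` has positive
entropy with respect to `T` and `μ`. -/
def IsMuEntropyPair [TopologicalSpace X] [MeasurableSpace X] (T : X → X) (μ : Measure X)
    (x y : X) : Prop :=
  x ≠ y ∧ ∀ A : Set X, MeasurableSet A → x ∈ interior A → y ∈ interior Aᶜ →
    0 < partKS μ T (fun z => if z ∈ A then (0 : Fin 2) else 1)

/-- `ν` is the relatively independent square `μ ⊠_G μ` of `μ` over the sub-σ-algebra `G`: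
it is determined by `ν(A × B) = ∫ E(1_A|G) · E(1_B|G) dμ` for all Borel sets `A`, `B`. -/
def IsCondSquare (G : MeasurableSpace X) [m0 : MeasurableSpace X] (μ : Measure X)
    (ν : Measure (X × X)) : Prop :=
  ∀ A B : Set X, MeasurableSet[m0] A → MeasurableSet[m0] B →
    ν (A ×ˢ B) = ENNReal.ofReal
      (∫ x, (μ[A.indicator (fun _ => (1 : ℝ)) | G]) x *
            (μ[B.indicator (fun _ => (1 : ℝ)) | G]) x ∂μ)

/-- The σ-algebra `m₁` is contained in `m₂` modulo `μ`-null sets. -/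
def SubModNull [MeasurableSpace X] (μ : Measure X) (m₁ m₂ : MeasurableSpace X) : Prop :=
  ∀ A : Set X, MeasurableSet[m₁] A → ∃ B : Set X, MeasurableSet[m₂] B ∧ μ (A ∆ B) = 0

end Defs

section Defs2

variable {X : Type*}

/-- The σ-algebra `F^- = ⋁_{n ≥ 1} T^{-n} F`. -/
def pastAlg (T : X → X) (F : MeasurableSpace X) : MeasurableSpace X :=
  ⨆ n : ℕ, MeasurableSpace.comap (T^[n + 1]) F

/-- The σ-algebra `F^T = ⋁_{n ∈ ℤ} T^{-n} F`, where `S = T⁻¹`. -/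
def hullAlg (T S : X → X) (F : MeasurableSpace X) : MeasurableSpace X :=
  ⨆ n : ℕ, MeasurableSpace.comap (T^[n]) F ⊔ MeasurableSpace.comap (S^[n]) F

/-- `P` is (the σ-algebra of) an *excellent* measurable partition for `(X, μ, T)` (here
`S = T⁻¹`): it is generating (`σ(P^T) = 𝒜` mod `μ`) and it is generated by an increasing
sequence of finite measurable partitions `Pₙ ↑ P` with `H(Pₙ|Pₙ⁻) − H(Pₙ|P⁻) → 0`. -/
def IsExcellentPartition (P : MeasurableSpace X) [m0 : MeasurableSpace X] (μ : Measure X)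
    (T S : X → X) : Prop :=
  P ≤ m0 ∧ SubModNull μ m0 (hullAlg T S P) ∧
  ∃ (m : ℕ → ℕ) (Q : ∀ n : ℕ, X → Fin (m n)),
    (∀ n, Measurable (Q n)) ∧
    Monotone (fun n => MeasurableSpace.comap (Q n) (⊤ : MeasurableSpace (Fin (m n)))) ∧
    (⨆ n : ℕ, MeasurableSpace.comap (Q n) (⊤ : MeasurableSpace (Fin (m n)))) = P ∧
    Tendsto (fun n => condPartEntropy μ (partPast T (Q n)) (Q n) -
      condPartEntropy μ (pastAlg T P) (Q n)) atTop (𝓝 0)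

end Defs2

namespace APE

/-- time shift of a finite set of indices -/
noncomputable def sh (s : Finset (ℕ × ℕ)) (i : ℕ) : Finset (ℕ × ℕ) :=
  s.image (fun a => (a.1, a.2 + i))

/-- union of the shifts of `s` by `i`, for `a ≤ i < a + n` -/
noncomputable def blk (s : Finset (ℕ × ℕ)) (a n : ℕ) : Finset (ℕ × ℕ) :=
  (Finset.range n).biUnion (fun i => sh s (a + i))

lemma mem_sh {s : Finset (ℕ × ℕ)} {i : ℕ} {x : ℕ × ℕ} :
    x ∈ sh s i ↔ ∃ b, (x.1, b) ∈ s ∧ b + i = x.2 := by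
  obtain ⟨x1, x2⟩ := x
  simp only [sh, Finset.mem_image, Prod.mk.injEq, Prod.exists]
  constructor
  · rintro ⟨a, b, h, rfl, rfl⟩; exact ⟨b, h, rfl⟩
  · rintro ⟨b, h, rfl⟩; exact ⟨x1, b, h, rfl, rfl⟩

lemma mem_blk {s : Finset (ℕ × ℕ)} {a n : ℕ} {x : ℕ × ℕ} :
    x ∈ blk s a n ↔ ∃ b i, (x.1, b) ∈ s ∧ a ≤ i ∧ i < a + n ∧ b + i = x.2 := by
  simp only [blk, Finset.mem_biUnion, Finset.mem_range, mem_sh]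
  constructor
  · rintro ⟨i, hi, b, hb, h⟩
    exact ⟨b, a + i, hb, by omega, by omega, h⟩
  · rintro ⟨b, i, hb, h1, h2, h3⟩
    exact ⟨i - a, by omega, b, hb, by omega⟩

lemma blk_mono {s t : Finset (ℕ × ℕ)} {a n a' n' : ℕ} (h : s ⊆ t) (h1 : a' ≤ a)
    (h2 : a + n ≤ a' + n') : blk s a n ⊆ blk t a' n' := by
  intro x hx
  rw [mem_blk] at hx ⊢
  obtain ⟨b, i, hb, h3, h4, h5⟩ := hx
  exact ⟨b, i, h hb, by omega, by omega, h5⟩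

lemma blk_union_set (s t : Finset (ℕ × ℕ)) (a n : ℕ) :
    blk (s ∪ t) a n = blk s a n ∪ blk t a n := by
  ext x
  simp only [Finset.mem_union, mem_blk]
  constructor
  · rintro ⟨b, i, hb | hb, h⟩
    · exact Or.inl ⟨b, i, hb, h⟩
    · exact Or.inr ⟨b, i, hb, h⟩
  · rintro (⟨b, i, hb, h⟩ | ⟨b, i, hb, h⟩)
    · exact ⟨b, i, Or.inl hb, h⟩
    · exact ⟨b, i, Or.inr hb, h⟩

lemma blk_append (s : Finset (ℕ × ℕ)) (a n m : ℕ) :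
    blk s a n ∪ blk s (a + n) m = blk s a (n + m) := by
  ext x
  simp only [Finset.mem_union, mem_blk]
  constructor
  · rintro (⟨b, i, hb, h3, h4, h5⟩ | ⟨b, i, hb, h3, h4, h5⟩)
    · exact ⟨b, i, hb, by omega, by omega, h5⟩
    · exact ⟨b, i, hb, by omega, by omega, h5⟩
  · rintro ⟨b, i, hb, h3, h4, h5⟩
    by_cases h : i < a + n
    · exact Or.inl ⟨b, i, hb, by omega, by omega, h5⟩
    · exact Or.inr ⟨b, i, hb, by omega, by omega, h5⟩

lemma blk_zero (s : Finset (ℕ × ℕ)) (a : ℕ) : blk s a 0 = ∅ := by simp [blk]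

lemma blk_one (s : Finset (ℕ × ℕ)) : blk s 0 1 = s := by
  ext x
  rw [mem_blk]
  constructor
  · rintro ⟨b, i, hb, h3, h4, h5⟩
    have : i = 0 := by omega
    subst this
    obtain ⟨x1, x2⟩ := x
    simp at h5
    subst h5; exact hb
  · intro h; exact ⟨x.2, 0, h, by omega, by omega, by omega⟩

lemma blk_succ (s : Finset (ℕ × ℕ)) (n : ℕ) : blk s 0 (n + 1) = s ∪ blk s 1 n := by
  rw [add_comm n 1, ← blk_append, blk_one]

lemma sh_blk (s : Finset (ℕ × ℕ)) (a n i : ℕ) : sh (blk s a n) i = blk s (a + i) n := by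
  ext x
  rw [mem_sh, mem_blk]
  constructor
  · rintro ⟨b, hb, h⟩
    rw [mem_blk] at hb
    obtain ⟨c, j, hc, h1, h2, h3⟩ := hb
    exact ⟨c, j + i, hc, by omega, by omega, by simp at h3; omega⟩
  · rintro ⟨c, j, hc, h1, h2, h3⟩
    exact ⟨x.2 - i, mem_blk.2 ⟨c, j - i, hc, by omega, by omega, by simp; omega⟩, by omega⟩

lemma sh_union (s t : Finset (ℕ × ℕ)) (i : ℕ) : sh (s ∪ t) i = sh s i ∪ sh t i := by
  simp [sh, Finset.image_union]

/-- Entropy-like set functions. -/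
structure SubMod (H : Finset (ℕ × ℕ) → ℝ) : Prop where
  empty : H ∅ = 0
  mono : ∀ s t, s ⊆ t → H s ≤ H t
  sub : ∀ s t u, t ⊆ u → H (s ∪ u) + H t ≤ H (s ∪ t) + H u
  shift : ∀ s, H (sh s 1) = H s

namespace SubMod
variable {H : Finset (ℕ × ℕ) → ℝ}

lemma blk_shift (hH : SubMod H) (s : Finset (ℕ × ℕ)) (a n : ℕ) : H (blk s (a + 1) n) = H (blk s a n) := by
  rw [← sh_blk, hH.shift]

lemma blk_shift0 (hH : SubMod H) (s : Finset (ℕ × ℕ)) (a n : ℕ) : H (blk s a n) = H (blk s 0 n) := by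
  induction a with
  | zero => rfl
  | succ a ih => rw [hH.blk_shift, ih]

/-- increments -/
lemma incr_anti (hH : SubMod H) (s : Finset (ℕ × ℕ)) :
    Antitone (fun n => H (blk s 0 (n + 1)) - H (blk s 0 n)) := by
  intro m n hmn
  have := hH.sub s (blk s 1 m) (blk s 1 n) (blk_mono (Finset.Subset.refl _) le_rfl (by omega))
  rw [← blk_succ, ← blk_succ, hH.blk_shift, hH.blk_shift] at this
  simp only; linarith

lemma incr_nonneg (hH : SubMod H) (s : Finset (ℕ × ℕ)) (n : ℕ) : 0 ≤ H (blk s 0 (n + 1)) - H (blk s 0 n) := by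
  have := hH.mono (blk s 0 n) (blk s 0 (n + 1))
    (blk_mono (Finset.Subset.refl _) le_rfl (by omega))
  linarith

lemma exists_rate (hH : SubMod H) (s : Finset (ℕ × ℕ)) : ∃ g : ℝ,
    (∀ n, g ≤ H (blk s 0 (n + 1)) - H (blk s 0 n)) ∧
    Tendsto (fun n => H (blk s 0 (n + 1)) - H (blk s 0 n)) atTop (𝓝 g) ∧
    Tendsto (fun n : ℕ => (n : ℝ)⁻¹ * H (blk s 0 n)) atTop (𝓝 g) := by
  have hb : BddBelow (Set.range (fun n => H (blk s 0 (n + 1)) - H (blk s 0 n))) :=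
    ⟨0, by rintro _ ⟨n, rfl⟩; exact hH.incr_nonneg s n⟩
  have ht := tendsto_atTop_ciInf (hH.incr_anti s) hb
  refine ⟨_, fun n => ciInf_le hb n, ht, ?_⟩
  have := ht.cesaro
  refine this.congr (fun n => ?_)
  rw [Finset.sum_range_sub (fun n => H (blk s 0 n)), blk_zero, hH.empty, sub_zero]

lemma add_ge {s : Finset (ℕ × ℕ)} {g : ℝ}
    (hg : ∀ n, g ≤ H (blk s 0 (n + 1)) - H (blk s 0 n)) (n m : ℕ) :
    n * g + H (blk s 0 m) ≤ H (blk s 0 (n + m)) := by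
  induction n with
  | zero => simp
  | succ n ih =>
    have := hg (n + m)
    rw [show n + 1 + m = n + m + 1 by ring]
    push_cast
    linarith

lemma step (hH : SubMod H) {A R p : Finset (ℕ × ℕ)} (hp : p ⊆ A) {c ε : ℝ} (hε : 0 < ε)
    (hc : ∀ N, c ≤ H (p ∪ blk A 1 N) - H (blk A 1 N)) :
    ∃ k, ∀ N, c - ε ≤ H (p ∪ (blk A 1 N ∪ blk R (k + 1) N)) - H (blk A 1 N ∪ blk R (k + 1) N) := by
  by_contra hcon
  push Not at hcon
  obtain ⟨gA, hA1, hA2, hA3⟩ := hH.exists_rate A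
  obtain ⟨gB, hB1, hB2, hB3⟩ := hH.exists_rate (A ∪ R)
  have key : ∀ k, ∃ M, ∀ N, M ≤ N →
      H (A ∪ (blk A 1 N ∪ blk R (k + 1) N)) - H (blk A 1 N ∪ blk R (k + 1) N) ≤ gA - ε / 2 := by
    intro k
    obtain ⟨N1, hN1⟩ := hcon k
    obtain ⟨N0, hN0⟩ := (hA2.eventually (gt_mem_nhds (show gA < gA + ε / 2 by linarith))).exists_forall_of_atTop
    refine ⟨max N1 N0, fun N hN => ?_⟩
    have h1 : H (p ∪ (blk A 1 N ∪ blk R (k + 1) N)) - H (blk A 1 N ∪ blk R (k + 1) N) < c - ε := by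
      have := hH.sub p (blk A 1 N1 ∪ blk R (k + 1) N1) (blk A 1 N ∪ blk R (k + 1) N)
        (Finset.union_subset_union (blk_mono (Finset.Subset.refl _) le_rfl (by omega))
          (blk_mono (Finset.Subset.refl _) le_rfl (by omega)))
      linarith
    have h2 := hN0 N (by omega)
    have h3 := hc N
    have h4 := hH.sub A (p ∪ blk A 1 N) (p ∪ (blk A 1 N ∪ blk R (k + 1) N)) (by
      intro x; simp only [Finset.mem_union]; tauto)
    have e1 : A ∪ (p ∪ (blk A 1 N ∪ blk R (k + 1) N)) = A ∪ (blk A 1 N ∪ blk R (k + 1) N) := by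
      rw [← Finset.union_assoc, Finset.union_eq_left.2 hp]
    have e2 : A ∪ (p ∪ blk A 1 N) = A ∪ blk A 1 N := by
      rw [← Finset.union_assoc, Finset.union_eq_left.2 hp]
    rw [e1, e2, ← blk_succ] at h4
    rw [hH.blk_shift] at h3
    linarith
  choose M hM using key
  have hev : ∀ᶠ n : ℕ in atTop, (n : ℝ)⁻¹ * H (blk (A ∪ R) 0 n) < gB + ε / 4 :=
    hB3.eventually (gt_mem_nhds (by linarith))
  obtain ⟨n, hn, hn1⟩ := (hev.and (eventually_ge_atTop 1)).exists
  have hnpos : (0 : ℝ) < n := by exact_mod_cast hn1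
  have hn' : H (blk (A ∪ R) 0 n) < n * (gB + ε / 4) := by
    rw [inv_mul_lt_iff₀ hnpos] at hn; exact hn
  obtain ⟨K, hK⟩ : ∃ K, ∀ k < n, M k ≤ K :=
    ⟨(Finset.range n).sup M, fun k hk => Finset.le_sup (f := M) (Finset.mem_range.2 hk)⟩
  have F : ∀ m ≤ n, H (blk A 0 m ∪ blk (A ∪ R) m K) ≤
      H (blk (A ∪ R) 0 K) + m * (gA - ε / 2) := by
    intro m
    induction m with
    | zero => intro _; simp [blk_zero]
    | succ m ih =>
      intro hm
      have ih := ih (by omega)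
      have h1 := hM m K (hK m (by omega))
      have h2 := hH.sub A (blk A 1 K ∪ blk R (m + 1) K) (blk A 1 m ∪ blk (A ∪ R) (m + 1) K) (by
        rw [blk_union_set, ← Finset.union_assoc, add_comm m 1, blk_append]
        exact Finset.union_subset_union (blk_mono (Finset.Subset.refl _) le_rfl (by omega))
          (Finset.Subset.refl _))
      rw [← Finset.union_assoc A, ← blk_succ] at h2
      have h3 : H (blk A 1 m ∪ blk (A ∪ R) (m + 1) K) = H (blk A 0 m ∪ blk (A ∪ R) m K) := by
        rw [← hH.shift (blk A 0 m ∪ _), sh_union, sh_blk, sh_blk, zero_add]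
      push_cast
      linarith
  have F := F n le_rfl
  have G := add_ge hB1 n K
  have S := hH.sub (blk (A ∪ R) 0 n) (blk A 0 n) (blk A 0 n ∪ blk (A ∪ R) n K)
    Finset.subset_union_left
  have hAB : blk A 0 n ⊆ blk (A ∪ R) 0 n := blk_mono Finset.subset_union_left le_rfl le_rfl
  rw [← Finset.union_assoc, Finset.union_eq_left.2 hAB] at S
  have e := blk_append (A ∪ R) 0 n K
  rw [zero_add] at e
  rw [e] at S
  have G2 := add_ge hA1 n 0
  rw [blk_zero, hH.empty, add_zero, add_zero] at G2
  nlinarith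

lemma exists_seq (hH : SubMod H) {c : ℝ} (hcpos : 0 < c)
    (hc : ∀ N, c ≤ H (blk {(0, 0)} 0 (N + 1)) - H (blk {(0, 0)} 0 N)) :
    ∃ A : ℕ → Finset (ℕ × ℕ), Monotone A ∧ (∀ j, ∃ k, (j, k) ∈ A j) ∧
      ∀ n N, c / 2 ≤ H ({(0, 0)} ∪ blk (A n) 1 N) - H (blk (A n) 1 N) := by
  let Good : ℕ → Finset (ℕ × ℕ) → Prop := fun n A => (0, 0) ∈ A ∧
    ∀ N, c / 2 + c / 2 * (1 / 2) ^ n ≤ H ({(0, 0)} ∪ blk A 1 N) - H (blk A 1 N)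
  have g0 : Good 0 {(0, 0)} := by
    refine ⟨by simp, fun N => ?_⟩
    have := hc N
    rw [blk_succ, ← hH.blk_shift _ 0] at this
    simp only [pow_zero]
    linarith
  have gs : ∀ n A, Good n A → ∃ A', Good (n + 1) A' ∧ A ⊆ A' ∧ ∃ k, (n + 1, k) ∈ A' := by
    rintro n A ⟨h0, h⟩
    have hpos : 0 < c / 2 * (1 / 2) ^ (n + 1) := by positivity
    obtain ⟨k, hk⟩ := hH.step (R := {(n + 1, 0)}) (Finset.singleton_subset_iff.2 h0) hpos h
    refine ⟨A ∪ {(n + 1, k)}, ⟨by simp [h0], fun N => ?_⟩, Finset.subset_union_left, k, by simp⟩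
    have hk := hk N
    have e : blk {(n + 1, 0)} (k + 1) N = blk {(n + 1, k)} 1 N := by
      ext x
      simp only [mem_blk, Finset.mem_singleton, Prod.mk.injEq]
      constructor
      · rintro ⟨b, i, ⟨h1, h2⟩, h3, h4, h5⟩
        exact ⟨k, i - k, ⟨h1, rfl⟩, by omega, by omega, by omega⟩
      · rintro ⟨b, i, ⟨h1, h2⟩, h3, h4, h5⟩
        exact ⟨0, i + k, ⟨h1, rfl⟩, by omega, by omega, by omega⟩
    rw [e, ← blk_union_set] at hk
    have : c / 2 * (1 / 2) ^ (n + 1) = c / 2 * (1 / 2) ^ n / 2 := by ring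
    linarith
  choose! f hf1 hf2 hf3 using gs
  let A : ℕ → Finset (ℕ × ℕ) := fun n => Nat.rec {(0, 0)} (fun n A => f n A) n
  have hA : ∀ n, Good n (A n) := by
    intro n
    induction n with
    | zero => exact g0
    | succ n ih => exact hf1 n (A n) ih
  refine ⟨A, monotone_nat_of_le_succ (fun n => hf2 n _ (hA n)), ?_, ?_⟩
  · intro j
    cases j with
    | zero => exact ⟨0, (hA 0).1⟩
    | succ j => exact hf3 j _ (hA j)
  · intro n N
    have := (hA n).2 N
    have hpos : 0 < c / 2 * (1 / 2) ^ n := by positivity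
    linarith

end SubMod
end APE

namespace APE

/-- Shannon entropy of a finite valued function. -/
noncomputable def ent {X : Type*} [MeasurableSpace X] (μ : Measure X) {ι : Type*} [Fintype ι]
    (f : X → ι) : ℝ := ∑ i : ι, Real.negMulLog (μ.real (f ⁻¹' {i}))

lemma negMulLog_sum_le {ι : Type*} (s : Finset ι) (v : ι → ℝ) (hv : ∀ i, 0 ≤ v i) :
    Real.negMulLog (∑ i ∈ s, v i) ≤ ∑ i ∈ s, Real.negMulLog (v i) := by
  simp only [Real.negMulLog]
  rw [← Finset.sum_neg_distrib, Finset.sum_mul]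
  refine Finset.sum_le_sum (fun i hi => ?_)
  have h1 : v i ≤ ∑ i ∈ s, v i := Finset.single_le_sum (f := v) (fun j _ => hv j) hi
  rcases (hv i).eq_or_lt with h | h
  · simp [← h]
  · have := Real.log_le_log h h1
    nlinarith

section
variable {X : Type*} [MeasurableSpace X] {μ : Measure X}
  {ι κ τ : Type*} [Fintype ι] [MeasurableSpace ι] [MeasurableSingletonClass ι]
  [Fintype κ] [MeasurableSpace κ] [MeasurableSingletonClass κ]
  [Fintype τ] [MeasurableSpace τ] [MeasurableSingletonClass τ]

lemma real_preimage_comp [IsFiniteMeasure μ] {g : X → ι} (hg : Measurable g) (s : Set ι) :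
    μ.real (g ⁻¹' s) = ∑ i with i ∈ s, μ.real (g ⁻¹' {i}) := by
  have : g ⁻¹' s = ⋃ i ∈ (Finset.univ.filter (· ∈ s)), g ⁻¹' {i} := by
    ext x; simp
  rw [this, measureReal_biUnion_finset]
  · intro i _ j _ hij
    exact Disjoint.preimage _ (by simpa using hij)
  · intro i _
    exact hg (measurableSet_singleton i)

lemma ent_le_of_det [IsFiniteMeasure μ] {f : X → κ} {g : X → ι} (hg : Measurable g)
    (h : ∀ x y, g x = g y → f x = f y) : ent μ f ≤ ent μ g := by
  rcases isEmpty_or_nonempty X with hX | ⟨⟨x0⟩⟩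
  · have : ∀ s : Set X, s = ∅ := fun s => Set.eq_empty_of_isEmpty s
    simp [ent, this]
  · have : Nonempty κ := ⟨f x0⟩
    obtain ⟨φ, hφ⟩ : ∃ φ : ι → κ, ∀ x, φ (g x) = f x := by
      refine ⟨Function.extend g f (fun _ => f x0), fun x => ?_⟩
      exact Function.FactorsThrough.extend_apply (fun a b hab => h a b hab) _ x
    have e : ∀ k, f ⁻¹' {k} = g ⁻¹' (φ ⁻¹' {k}) := by
      intro k; ext x; simp [hφ]
    unfold ent
    calc _ = ∑ k, Real.negMulLog (∑ i with i ∈ φ ⁻¹' {k}, μ.real (g ⁻¹' {i})) :=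
          Finset.sum_congr rfl fun k _ => by rw [e, real_preimage_comp hg]
      _ ≤ ∑ k, ∑ i with i ∈ φ ⁻¹' {k}, Real.negMulLog (μ.real (g ⁻¹' {i})) :=
          Finset.sum_le_sum fun k _ => negMulLog_sum_le _ _ fun i => measureReal_nonneg
      _ = _ := by
          simp only [Set.mem_preimage, Set.mem_singleton_iff]
          exact Finset.sum_fiberwise _ _ _

lemma ent_eq_of_det [IsFiniteMeasure μ] {f : X → κ} {g : X → ι} (hf : Measurable f)
    (hg : Measurable g) (h : ∀ x y, g x = g y ↔ f x = f y) : ent μ f = ent μ g :=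
  le_antisymm (ent_le_of_det hg fun x y => (h x y).1) (ent_le_of_det hf fun x y => (h x y).2)

lemma submod_fin {α β γ : Type*} [Fintype α] [Fintype β] [Fintype γ] (w : α → β → γ → ℝ)
    (hw : ∀ a b c, 0 ≤ w a b c) :
    ∑ a, ∑ b, ∑ c, Real.negMulLog (w a b c) + ∑ c, Real.negMulLog (∑ a, ∑ b, w a b c) ≤
    ∑ a, ∑ c, Real.negMulLog (∑ b, w a b c) + ∑ b, ∑ c, Real.negMulLog (∑ a, w a b c) := by
  set x : α → γ → ℝ := fun a c => ∑ b, w a b c with hx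
  set y : β → γ → ℝ := fun b c => ∑ a, w a b c with hy
  set z : γ → ℝ := fun c => ∑ a, ∑ b, w a b c with hz
  have hx0 : ∀ a c, 0 ≤ x a c := fun a c => Finset.sum_nonneg fun b _ => hw a b c
  have hy0 : ∀ b c, 0 ≤ y b c := fun b c => Finset.sum_nonneg fun a _ => hw a b c
  have hz0 : ∀ c, 0 ≤ z c := fun c => Finset.sum_nonneg fun a _ => hx0 a c
  have hxz : ∀ c, ∑ a, x a c = z c := fun c => rfl
  have hyz : ∀ c, ∑ b, y b c = z c := fun c => Finset.sum_comm
  have wx : ∀ a b c, w a b c ≤ x a c := fun a b c =>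
    Finset.single_le_sum (f := fun b => w a b c) (fun b _ => hw a b c) (Finset.mem_univ b)
  have wy : ∀ a b c, w a b c ≤ y b c := fun a b c =>
    Finset.single_le_sum (f := fun a => w a b c) (fun a _ => hw a b c) (Finset.mem_univ a)
  have xz : ∀ a c, x a c ≤ z c := fun a c =>
    Finset.single_le_sum (f := fun a => x a c) (fun a _ => hx0 a c) (Finset.mem_univ a)
  have term : ∀ a b c, Real.negMulLog (w a b c) - w a b c * Real.log (z c)
      + w a b c * Real.log (x a c) + w a b c * Real.log (y b c)
      ≤ x a c * y b c / z c - w a b c := by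
    intro a b c
    rcases (hw a b c).eq_or_lt with h | h
    · rw [← h]
      simp only [Real.negMulLog_zero, zero_mul, sub_zero, add_zero]
      exact div_nonneg (mul_nonneg (hx0 a c) (hy0 b c)) (hz0 c)
    · have h1 : 0 < x a c := h.trans_le (wx a b c)
      have h2 : 0 < y b c := h.trans_le (wy a b c)
      have h3 : 0 < z c := h1.trans_le (xz a c)
      have hl := Real.log_le_sub_one_of_pos (show 0 < x a c * y b c / (w a b c * z c) by positivity)
      rw [Real.log_div (by positivity) (by positivity), Real.log_mul h1.ne' h2.ne',
        Real.log_mul h.ne' h3.ne'] at hl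
      have := mul_le_mul_of_nonneg_left hl h.le
      have e : w a b c * (x a c * y b c / (w a b c * z c) - 1) = x a c * y b c / z c - w a b c := by
        field_simp
      rw [e] at this
      simp only [Real.negMulLog]
      linarith
  have total := Finset.sum_le_sum fun a (_ : a ∈ Finset.univ) => Finset.sum_le_sum
    fun b (_ : b ∈ Finset.univ) => Finset.sum_le_sum fun c (_ : c ∈ Finset.univ) => term a b c
  simp only [Finset.sum_add_distrib, Finset.sum_sub_distrib] at total
  have E1 : ∑ a, ∑ b, ∑ c, w a b c * Real.log (z c) = - ∑ c, Real.negMulLog (z c) := by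
    calc _ = ∑ a, ∑ c, ∑ b, w a b c * Real.log (z c) :=
          Finset.sum_congr rfl fun a _ => Finset.sum_comm
      _ = ∑ c, ∑ a, ∑ b, w a b c * Real.log (z c) := Finset.sum_comm
      _ = _ := by
        rw [← Finset.sum_neg_distrib]
        refine Finset.sum_congr rfl fun c _ => ?_
        simp only [← Finset.sum_mul]
        simp [Real.negMulLog, hz]
  have E2 : ∑ a, ∑ b, ∑ c, w a b c * Real.log (x a c) = - ∑ a, ∑ c, Real.negMulLog (x a c) := by
    calc _ = ∑ a, ∑ c, ∑ b, w a b c * Real.log (x a c) :=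
          Finset.sum_congr rfl fun a _ => Finset.sum_comm
      _ = _ := by
        rw [← Finset.sum_neg_distrib]
        refine Finset.sum_congr rfl fun a _ => ?_
        rw [← Finset.sum_neg_distrib]
        refine Finset.sum_congr rfl fun c _ => ?_
        rw [← Finset.sum_mul]
        simp [Real.negMulLog, hx]
  have E3 : ∑ a, ∑ b, ∑ c, w a b c * Real.log (y b c) = - ∑ b, ∑ c, Real.negMulLog (y b c) := by
    calc _ = ∑ b, ∑ a, ∑ c, w a b c * Real.log (y b c) := Finset.sum_comm
      _ = ∑ b, ∑ c, ∑ a, w a b c * Real.log (y b c) :=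
          Finset.sum_congr rfl fun a _ => Finset.sum_comm
      _ = _ := by
        rw [← Finset.sum_neg_distrib]
        refine Finset.sum_congr rfl fun a _ => ?_
        rw [← Finset.sum_neg_distrib]
        refine Finset.sum_congr rfl fun c _ => ?_
        rw [← Finset.sum_mul]
        simp [Real.negMulLog, hy]
  have E4 : ∑ a, ∑ b, ∑ c, x a c * y b c / z c = ∑ a, ∑ b, ∑ c, w a b c := by
    calc _ = ∑ a, ∑ c, ∑ b, x a c * y b c / z c :=
          Finset.sum_congr rfl fun a _ => Finset.sum_comm
      _ = ∑ a, ∑ c, x a c := by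
        refine Finset.sum_congr rfl fun a _ => Finset.sum_congr rfl fun c _ => ?_
        rw [← Finset.sum_div, ← Finset.mul_sum, hyz]
        rcases (hz0 c).eq_or_lt with h | h
        · have : x a c = 0 := le_antisymm ((xz a c).trans h.ge) (hx0 a c)
          simp [this]
        · field_simp
      _ = _ := Finset.sum_congr rfl fun a _ => Finset.sum_comm
  rw [E1, E2, E3, E4] at total
  linarith

lemma ent_submod [IsFiniteMeasure μ] {f : X → ι} {g : X → κ} {h : X → τ} (hf : Measurable f)
    (hg : Measurable g) (hh : Measurable h) :
    ent μ (fun x => (f x, g x, h x)) + ent μ h ≤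
      ent μ (fun x => (f x, h x)) + ent μ (fun x => (g x, h x)) := by
  have hF : Measurable (fun x => (f x, g x, h x)) := hf.prodMk (hg.prodMk hh)
  have := submod_fin (fun a b c => μ.real ((fun x => (f x, g x, h x)) ⁻¹' {(a, b, c)}))
    (fun a b c => measureReal_nonneg)
  have e1 : ∀ c, μ.real (h ⁻¹' {c}) =
      ∑ a, ∑ b, μ.real ((fun x => (f x, g x, h x)) ⁻¹' {(a, b, c)}) := by
    intro c
    have e : h ⁻¹' {c} = (fun x => (f x, g x, h x)) ⁻¹' {q | q.2.2 = c} := by ext x; simp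
    rw [e, real_preimage_comp hF, Finset.sum_filter, Fintype.sum_prod_type]
    refine Finset.sum_congr rfl fun a _ => ?_
    rw [Fintype.sum_prod_type]
    refine Finset.sum_congr rfl fun b _ => ?_
    simp
  have e2 : ∀ a c, μ.real ((fun x => (f x, h x)) ⁻¹' {(a, c)}) =
      ∑ b, μ.real ((fun x => (f x, g x, h x)) ⁻¹' {(a, b, c)}) := by
    intro a c
    have e : (fun x => (f x, h x)) ⁻¹' {(a, c)} =
        (fun x => (f x, g x, h x)) ⁻¹' {q | q.1 = a ∧ q.2.2 = c} := by ext x; simp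
    rw [e, real_preimage_comp hF, Finset.sum_filter, Fintype.sum_prod_type,
      Finset.sum_eq_single a]
    · rw [Fintype.sum_prod_type]
      refine Finset.sum_congr rfl fun b _ => ?_
      simp
    · intro a' _ h; simp [h]
    · simp
  have e3 : ∀ b c, μ.real ((fun x => (g x, h x)) ⁻¹' {(b, c)}) =
      ∑ a, μ.real ((fun x => (f x, g x, h x)) ⁻¹' {(a, b, c)}) := by
    intro b c
    have e : (fun x => (g x, h x)) ⁻¹' {(b, c)} =
        (fun x => (f x, g x, h x)) ⁻¹' {q | q.2.1 = b ∧ q.2.2 = c} := by ext x; simp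
    rw [e, real_preimage_comp hF, Finset.sum_filter, Fintype.sum_prod_type]
    refine Finset.sum_congr rfl fun a _ => ?_
    rw [Fintype.sum_prod_type, Finset.sum_eq_single b]
    · simp
    · intro a' _ h; simp [h]
    · simp
  simp only [ent, Fintype.sum_prod_type, e1, e2, e3]
  exact this

lemma ent_comp {f : X → ι} (hf : Measurable f) {T : X → X} (hT : MeasurePreserving T μ μ) :
    ent μ (f ∘ T) = ent μ f := by
  unfold ent
  refine Finset.sum_congr rfl fun i _ => ?_
  rw [Set.preimage_comp, measureReal_def, hT.measure_preimage
    (hf (measurableSet_singleton i)).nullMeasurableSet, measureReal_def]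

end

section
variable {X : Type*}

/-- joint variable -/
def jn (T : X → X) {m : ℕ → ℕ} (P : ∀ j, X → Fin (m j)) (s : Finset (ℕ × ℕ)) (x : X) :
    (a : s) → Fin (m a.1.1) := fun a => P a.1.1 (T^[a.1.2] x)

lemma jn_eq_iff (T : X → X) {m : ℕ → ℕ} (P : ∀ j, X → Fin (m j)) (s : Finset (ℕ × ℕ)) (x y : X) :
    jn T P s x = jn T P s y ↔ ∀ a ∈ s, P a.1 (T^[a.2] x) = P a.1 (T^[a.2] y) := by
  simp only [jn, funext_iff, Subtype.forall]

lemma jn_measurable [MeasurableSpace X] {T : X → X} (hT : Measurable T) {m : ℕ → ℕ}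
    {P : ∀ j, X → Fin (m j)} (hP : ∀ j, Measurable (P j)) (s : Finset (ℕ × ℕ)) :
    Measurable (jn T P s) :=
  measurable_pi_lambda _ fun a => (hP _).comp (hT.iterate _)

lemma subMod_jn [MeasurableSpace X] {μ : Measure X} [IsProbabilityMeasure μ] {T : X → X}
    (hT : MeasurePreserving T μ μ) {m : ℕ → ℕ}
    {P : ∀ j, X → Fin (m j)} (hP : ∀ j, Measurable (P j)) :
    SubMod (fun s => ent μ (jn T P s)) where
  empty := by
    have e : ∀ i, jn T P ∅ ⁻¹' {i} = Set.univ := by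
      intro i; ext x; simp only [Set.mem_preimage, Set.mem_singleton_iff, Set.mem_univ, iff_true]
      exact funext fun a => (Finset.notMem_empty _ a.2).elim
    simp [ent, e]
  mono s t hst := ent_le_of_det (jn_measurable hT.measurable hP t) fun x y h => by
    rw [jn_eq_iff] at h ⊢
    exact fun a ha => h a (hst ha)
  sub s t u htu := by
    have ms := jn_measurable hT.measurable hP s
    have mt := jn_measurable hT.measurable hP t
    have mu := jn_measurable hT.measurable hP u
    have := ent_submod (μ := μ) ms mu mt
    rw [ent_eq_of_det (ms.prodMk (mu.prodMk mt)) (jn_measurable hT.measurable hP (s ∪ u)),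
      ent_eq_of_det (ms.prodMk mt) (jn_measurable hT.measurable hP (s ∪ t)),
      ent_eq_of_det (mu.prodMk mt) mu] at this
    · exact this
    · intro x y
      simp only [Prod.mk.injEq, jn_eq_iff]
      exact ⟨fun h => ⟨h, fun a ha => h a (htu ha)⟩, fun h => h.1⟩
    · intro x y
      simp only [Prod.mk.injEq, jn_eq_iff, Finset.mem_union]
      exact ⟨fun h => ⟨fun a ha => h a (Or.inl ha), fun a ha => h a (Or.inr ha)⟩,
        fun h a ha => ha.elim (h.1 a) (h.2 a)⟩
    · intro x y
      simp only [Prod.mk.injEq, jn_eq_iff, Finset.mem_union]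
      exact ⟨fun h => ⟨fun a ha => h a (Or.inl ha), fun a ha => h a (Or.inr ha),
        fun a ha => h a (Or.inr (htu ha))⟩, fun h a ha => ha.elim (h.1 a) (h.2.1 a)⟩
  shift s := by
    have ms := jn_measurable hT.measurable hP s
    show ent μ (jn T P (sh s 1)) = ent μ (jn T P s)
    rw [← ent_comp ms hT]
    refine ent_eq_of_det (jn_measurable hT.measurable hP _) (ms.comp hT.measurable) ?_
    intro x y
    simp only [Function.comp, jn_eq_iff, sh, Finset.mem_image]
    constructor
    · rintro h _ ⟨a, ha, rfl⟩
      simpa using h a ha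
    · intro h a ha
      simpa using h _ ⟨a, ha, rfl⟩

end
end APE

namespace APE

section
variable {X : Type*} [m0 : MeasurableSpace X] {μ : Measure X}
  {ι κ : Type*} [Fintype ι] [MeasurableSpace ι] [MeasurableSingletonClass ι]
  [Fintype κ] [mκ : MeasurableSpace κ] [MeasurableSingletonClass κ]

lemma integral_comp_fin [IsFiniteMeasure μ] {q : X → κ} (hq : Measurable q) (φ : κ → ℝ) :
    ∫ x, φ (q x) ∂μ = ∑ j, μ.real (q ⁻¹' {j}) * φ j := by
  have hφ : Measurable φ := measurable_of_finite φ
  have h1 : ∫ x, φ (q x) ∂μ = ∫ j, φ j ∂(μ.map q) :=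
    (integral_map hq.aemeasurable hφ.aestronglyMeasurable).symm
  rw [h1, integral_fintype (Integrable.of_finite)]
  refine Finset.sum_congr rfl fun j _ => ?_
  rw [measureReal_def, Measure.map_apply hq (measurableSet_singleton j), measureReal_def,
    smul_eq_mul]

lemma condExp_fin [IsFiniteMeasure μ] {q : X → κ} (hq : Measurable q) {A : Set X}
    (hA : MeasurableSet A) :
    (fun x => μ.real (A ∩ q ⁻¹' {q x}) / μ.real (q ⁻¹' {q x})) =ᵐ[μ]
      μ[A.indicator (fun _ => (1 : ℝ)) | MeasurableSpace.comap q mκ] := by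
  set c : κ → ℝ := fun j => μ.real (A ∩ q ⁻¹' {j}) / μ.real (q ⁻¹' {j}) with hc
  have hcm : Measurable c := measurable_of_finite c
  have hi : Integrable (fun x => c (q x)) μ := by
    have : Integrable c (μ.map q) := Integrable.of_finite
    exact this.comp_measurable hq
  refine ae_eq_condExp_of_forall_setIntegral_eq hq.comap_le
    ((integrable_const (1 : ℝ)).indicator hA) (fun s _ _ => hi.integrableOn) ?_ ?_
  · rintro _ ⟨S, hS, rfl⟩ _
    have e1 : ∫ x in q ⁻¹' S, c (q x) ∂μ = ∫ x, (S.indicator c) (q x) ∂μ := by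
      rw [← integral_indicator (hq hS)]; rfl
    rw [e1, integral_comp_fin hq]
    rw [integral_indicator_const _ hA, smul_eq_mul, mul_one, measureReal_restrict_apply hA]
    have e2 : A ∩ q ⁻¹' S = ⋃ j ∈ (Finset.univ.filter (· ∈ S)), A ∩ q ⁻¹' {j} := by
      ext x; simp
    rw [e2, measureReal_biUnion_finset, Finset.sum_filter]
    · refine Finset.sum_congr rfl fun j _ => ?_
      by_cases hj : j ∈ S
      · simp only [hj, Set.indicator_of_mem, if_true, hc]
        by_cases h0 : μ.real (q ⁻¹' {j}) = 0
        · have : μ.real (A ∩ q ⁻¹' {j}) = 0 :=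
            le_antisymm ((measureReal_mono Set.inter_subset_right).trans h0.le) measureReal_nonneg
          simp [h0, this]
        · field_simp
      · simp [hj]
    · intro i _ j _ hij
      exact (Disjoint.preimage q (by simpa using hij)).mono Set.inter_subset_right
        Set.inter_subset_right
    · intro i _
      exact hA.inter (hq (measurableSet_singleton i))
  · have h : Measurable[MeasurableSpace.comap q mκ] (fun x => c (q x)) :=
      hcm.comp (comap_measurable q)
    exact h.stronglyMeasurable.aestronglyMeasurable

lemma condPart_fin [IsFiniteMeasure μ] {p : X → ι} (hp : Measurable p) {q : X → κ}
    (hq : Measurable q) :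
    condPartEntropy μ (MeasurableSpace.comap q mκ) p =
      ent μ (fun x => (p x, q x)) - ent μ q := by
  have hF : Measurable (fun x => (p x, q x)) := hp.prodMk hq
  set w : ι → κ → ℝ := fun i j => μ.real (p ⁻¹' {i} ∩ q ⁻¹' {j}) with hw
  set z : κ → ℝ := fun j => μ.real (q ⁻¹' {j}) with hz
  have ew : ∀ i j, μ.real ((fun x => (p x, q x)) ⁻¹' {(i, j)}) = w i j := by
    intro i j
    have : (fun x => (p x, q x)) ⁻¹' {(i, j)} = p ⁻¹' {i} ∩ q ⁻¹' {j} := by ext x; simp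
    rw [this]
  have ez : ∀ j, z j = ∑ i, w i j := by
    intro j
    have e : q ⁻¹' {j} = (fun x => (p x, q x)) ⁻¹' {a | a.2 = j} := by ext x; simp
    show μ.real (q ⁻¹' {j}) = _
    rw [e, real_preimage_comp hF, Finset.sum_filter, Fintype.sum_prod_type]
    refine Finset.sum_congr rfl fun i _ => ?_
    simp [ew]
  have wz : ∀ i j, w i j ≤ z j := fun i j => measureReal_mono Set.inter_subset_right
  have h1 : ∀ i, ∫ x, Real.negMulLog ((μ[(p ⁻¹' {i}).indicator (fun _ => (1 : ℝ)) |
      MeasurableSpace.comap q mκ]) x) ∂μ =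
      ∑ j, z j * Real.negMulLog (w i j / z j) := by
    intro i
    rw [← integral_comp_fin hq (fun j => Real.negMulLog (w i j / z j))]
    refine integral_congr_ae ?_
    filter_upwards [condExp_fin (μ := μ) hq (hp (measurableSet_singleton i))] with x hx
    rw [← hx]
  unfold condPartEntropy ent
  simp only [h1, Fintype.sum_prod_type, ew]
  rw [Finset.sum_comm, Finset.sum_comm (f := fun i j => Real.negMulLog (w i j)),
    ← Finset.sum_sub_distrib]
  refine Finset.sum_congr rfl fun j _ => ?_
  have e : Real.negMulLog (μ.real (q ⁻¹' {j})) = ∑ i, - w i j * Real.log (z j) := by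
    rw [← Finset.sum_mul, Finset.sum_neg_distrib, ← ez]; rfl
  rw [e, ← Finset.sum_sub_distrib]
  refine Finset.sum_congr rfl fun i _ => ?_
  have hw0 : 0 ≤ w i j := measureReal_nonneg
  rcases hw0.eq_or_lt with h | h
  · simp [← h]
  · have hz0 : 0 < z j := h.trans_le (wz i j)
    simp only [Real.negMulLog]
    rw [Real.log_div h.ne' hz0.ne']
    field_simp
    ring

lemma negMulLog_bound {t : ℝ} (h0 : 0 ≤ t) (h1 : t ≤ 1) : ‖Real.negMulLog t‖ ≤ 1 := by
  rw [Real.norm_of_nonneg (Real.negMulLog_nonneg h0 h1)]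
  have := Real.negMulLog_le_one_sub_self h0
  linarith

lemma condExp_ind_mem {X : Type*} {F : MeasurableSpace X} [m0 : MeasurableSpace X]
    {μ : Measure X} [IsProbabilityMeasure μ] (hF : F ≤ m0) {A : Set X}
    (hA : MeasurableSet A) :
    ∀ᵐ x ∂μ, 0 ≤ (μ[A.indicator (fun _ => (1 : ℝ)) | F]) x ∧
      (μ[A.indicator (fun _ => (1 : ℝ)) | F]) x ≤ 1 := by
  have hi : Integrable (A.indicator (fun _ => (1 : ℝ))) μ := (integrable_const (1 : ℝ)).indicator hA
  have h0 : 0 ≤ᵐ[μ] μ[A.indicator (fun _ => (1 : ℝ)) | F] :=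
    condExp_nonneg (Eventually.of_forall fun x => Set.indicator_nonneg (fun _ _ => zero_le_one) x)
  have h1 : μ[A.indicator (fun _ => (1 : ℝ)) | F] ≤ᵐ[μ] μ[(fun _ => (1 : ℝ)) | F] :=
    condExp_mono hi (integrable_const _) (Eventually.of_forall fun x =>
      Set.indicator_le_self' (fun _ _ => zero_le_one) x)
  rw [condExp_const hF] at h1
  filter_upwards [h0, h1] with x a b using ⟨a, b⟩

lemma levy [IsProbabilityMeasure μ] (F : Filtration ℕ m0) {p : X → ι} (hp : Measurable p) :
    Tendsto (fun n => condPartEntropy μ (F n) p) atTop (𝓝 (condPartEntropy μ (⨆ n, F n) p)) := by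
  unfold condPartEntropy
  refine tendsto_finsetSum _ fun i _ => ?_
  refine tendsto_integral_of_dominated_convergence (fun _ => (1 : ℝ)) ?_ (integrable_const _) ?_ ?_
  · intro n
    exact Real.continuous_negMulLog.comp_aestronglyMeasurable
      (stronglyMeasurable_condExp.mono (F.le n)).aestronglyMeasurable
  · intro n
    filter_upwards [condExp_ind_mem (μ := μ) (F.le n) (hp (measurableSet_singleton i))] with x hx
    exact negMulLog_bound hx.1 hx.2
  · filter_upwards [tendsto_ae_condExp (μ := μ) (ℱ := F)
      ((p ⁻¹' {i}).indicator (fun _ => (1 : ℝ)))] with x hx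
    exact (Real.continuous_negMulLog.tendsto _).comp hx

/-- If each cell of `p` agrees a.e. with a set in `F`, then `H(p | F) = 0`. -/
lemma condPart_zero {X : Type*} {F : MeasurableSpace X} [m0 : MeasurableSpace X]
    {μ : Measure X} [IsProbabilityMeasure μ] (hF : F ≤ m0) {p : X → ι}
    (h : ∀ i, ∃ E, MeasurableSet[F] E ∧ E =ᵐ[μ] p ⁻¹' {i}) : condPartEntropy μ F p = 0 := by
  unfold condPartEntropy
  refine Finset.sum_eq_zero fun i _ => ?_
  obtain ⟨E, hE, hEi⟩ := h i
  have hi : Integrable (E.indicator (fun _ => (1 : ℝ))) μ :=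
    (integrable_const (1 : ℝ)).indicator (hF _ hE)
  have h1 : μ[(p ⁻¹' {i}).indicator (fun _ => (1 : ℝ)) | F] =ᵐ[μ] E.indicator (fun _ => (1 : ℝ)) := by
    have e := condExp_congr_ae (m := F) (indicator_ae_eq_of_ae_eq_set (f := fun _ => (1 : ℝ)) hEi)
    have e2 : μ[E.indicator (fun _ => (1 : ℝ)) | F] = E.indicator (fun _ => (1 : ℝ)) :=
      condExp_of_stronglyMeasurable hF (stronglyMeasurable_const.indicator hE) hi
    rw [e2] at e
    exact e.symm
  rw [integral_congr_ae (g := fun _ => (0 : ℝ))]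
  · simp
  · filter_upwards [h1] with x hx
    rw [hx]
    by_cases hxE : x ∈ E <;> simp [hxE]

end

section
variable {X : Type*} [m0 : MeasurableSpace X] {μ : Measure X}

lemma comap_jn_le_iff {T : X → X} {m : ℕ → ℕ} {P : ∀ j, X → Fin (m j)} {s : Finset (ℕ × ℕ)}
    {F : MeasurableSpace X} :
    MeasurableSpace.comap (jn T P s) MeasurableSpace.pi ≤ F ↔
      ∀ a ∈ s, MeasurableSpace.comap (fun x => P a.1 (T^[a.2] x)) ⊤ ≤ F := by
  rw [← measurable_iff_comap_le, measurable_pi_iff, Subtype.forall]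
  refine forall₂_congr fun a ha => ?_
  rw [← measurable_iff_comap_le]
  rfl

/-- filtration generated by an increasing sequence of finite index sets -/
def filt {T : X → X} (hT : Measurable T) {m : ℕ → ℕ} {P : ∀ j, X → Fin (m j)}
    (hP : ∀ j, Measurable (P j)) {S : ℕ → Finset (ℕ × ℕ)} (hS : Monotone S) : Filtration ℕ m0 where
  seq n := MeasurableSpace.comap (jn T P (S n)) MeasurableSpace.pi
  mono' := fun n n' hn => comap_jn_le_iff.2 fun a ha => comap_jn_le_iff.1 le_rfl a (hS hn ha)
  le' := fun n => (jn_measurable hT hP (S n)).comap_le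

lemma filt_le_iff {X : Type*} {F : MeasurableSpace X} [m0 : MeasurableSpace X] {T : X → X} (hT : Measurable T) {m : ℕ → ℕ} {P : ∀ j, X → Fin (m j)}
    (hP : ∀ j, Measurable (P j)) {S : ℕ → Finset (ℕ × ℕ)} (hS : Monotone S) (n : ℕ) :
    filt hT hP hS n ≤ F ↔
      ∀ a ∈ S n, MeasurableSpace.comap (fun x => P a.1 (T^[a.2] x)) ⊤ ≤ F :=
  comap_jn_le_iff

/-- word map -/
def pw (T : X → X) {k : ℕ} (p : X → Fin k) (n : ℕ) (x : X) : Fin n → Fin k := fun i => p (T^[i] x)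

lemma pw_measurable {T : X → X} (hT : Measurable T) {k : ℕ} {p : X → Fin k} (hp : Measurable p)
    (n : ℕ) : Measurable (pw T p n) :=
  measurable_pi_lambda _ fun i => hp.comp (hT.iterate _)

lemma ent_pw [IsFiniteMeasure μ] {T : X → X} (hT : Measurable T) {m : ℕ → ℕ} {P : ∀ j, X → Fin (m j)}
    (hP : ∀ j, Measurable (P j)) (n : ℕ) :
    ent μ (jn T P (blk {(0, 0)} 0 n)) = ent μ (pw T (P 0) n) := by
  refine ent_eq_of_det (jn_measurable hT hP _) (pw_measurable hT (hP 0) n) fun x y => ?_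
  rw [jn_eq_iff]
  simp only [pw, funext_iff, mem_blk, Finset.mem_singleton, Prod.mk.injEq]
  constructor
  · rintro h ⟨a1, a2⟩ ⟨b, i, ⟨h1, rfl⟩, h3, h4, h5⟩
    simp only [zero_add] at h1 h4 h5
    subst h1; subst h5
    exact h ⟨i, h4⟩
  · intro h i
    exact h (0, i) ⟨0, i, ⟨rfl, rfl⟩, by omega, by simp, by simp⟩

/-- conditional entropy given a filtration -/
lemma levy_jn [IsProbabilityMeasure μ] {T : X → X} (hT : Measurable T) {m : ℕ → ℕ}
    {P : ∀ j, X → Fin (m j)}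
    (hP : ∀ j, Measurable (P j)) {S : ℕ → Finset (ℕ × ℕ)} (hS : Monotone S) :
    Tendsto (fun n => ent μ (jn T P ({(0, 0)} ∪ S n)) - ent μ (jn T P (S n))) atTop
      (𝓝 (condPartEntropy μ (⨆ n, filt hT hP hS n) (P 0))) := by
  refine (levy (μ := μ) (filt hT hP hS) (hP 0)).congr fun n => ?_
  have h := condPart_fin (μ := μ) (hP 0) (jn_measurable hT hP (S n))
  refine h.trans ?_
  congr 1
  refine ent_eq_of_det ((hP 0).prodMk (jn_measurable hT hP _)) (jn_measurable hT hP _) fun x y => ?_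
  simp only [Prod.mk.injEq, jn_eq_iff, Finset.mem_union, Finset.mem_singleton]
  constructor
  · intro h
    exact ⟨h (0, 0) (Or.inl rfl), fun a ha => h a (Or.inr ha)⟩
  · rintro ⟨h1, h2⟩ a (rfl | ha)
    · exact h1
    · exact h2 a ha

lemma partKS_le [IsProbabilityMeasure μ] {T : X → X} (hT : MeasurePreserving T μ μ) {k : ℕ}
    {p : X → Fin k} (hp : Measurable p) (N : ℕ) :
    partKS μ T p ≤ ent μ (pw T p (N + 1)) - ent μ (pw T p N) := by
  have hTm := hT.measurable
  have hP : ∀ j : ℕ, Measurable ((fun _ => p) j : X → Fin k) := fun _ => hp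
  have hS : Monotone (fun n => blk {(0, 0)} 1 n) := fun a b hab =>
    blk_mono (Finset.Subset.refl _) le_rfl (by omega)
  have hl := levy_jn (μ := μ) (m := fun _ => k) hTm hP hS
  have hsub := subMod_jn (m := fun _ => k) hT hP
  have e : (⨆ n, filt (m := fun _ => k) hTm hP hS n) = partPast T p := by
    apply le_antisymm
    · refine iSup_le fun n => (filt_le_iff (m := fun _ => k) hTm hP hS n).2 ?_
      intro a ha
      obtain ⟨b, i, h1, h2, h3, h4⟩ := mem_blk.1 ha
      simp only [Finset.mem_singleton, Prod.mk.injEq] at h1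
      have : a.2 = (i - 1) + 1 := by omega
      rw [this]
      exact le_iSup (fun n => MeasurableSpace.comap (fun x => p (T^[n + 1] x)) ⊤) (i - 1)
    · refine iSup_le fun n => ?_
      refine le_trans ?_ (le_iSup (fun n => filt (m := fun _ => k) hTm hP hS n) (n + 1))
      exact (filt_le_iff (m := fun _ => k) hTm hP hS (n + 1)).1 le_rfl (0, n + 1) (mem_blk.2 ⟨0, n + 1, by simp, by omega, by omega,
        by simp⟩)
  rw [e] at hl
  have hl' : Tendsto (fun n => ent μ (pw T p (n + 1)) - ent μ (pw T p n)) atTop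
      (𝓝 (partKS μ T p)) := by
    refine hl.congr fun n => ?_
    rw [← blk_succ, ent_pw hTm hP]
    have := hsub.blk_shift {(0, 0)} 0 n
    rw [zero_add] at this
    rw [this, ent_pw hTm hP]
  have hanti : Antitone (fun n => ent μ (pw T p (n + 1)) - ent μ (pw T p n)) := by
    have := hsub.incr_anti {(0, 0)}
    simpa only [ent_pw hTm hP] using this
  exact hanti.le_of_tendsto hl' N

end
end APE

namespace APE

lemma null_frontier_biInter {X : Type*} [TopologicalSpace X] [MeasurableSpace X] {μ : Measure X}
    {ι : Type*} (s : Finset ι) (f : ι → Set X)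
    (h : ∀ i ∈ s, μ (frontier (f i)) = 0) : μ (frontier (⋂ i ∈ s, f i)) = 0 := by
  induction s using Finset.induction_on with
  | empty => simp
  | insert a s ha ih =>
    rw [Finset.set_biInter_insert]
    exact null_frontier_inter (h a (by simp)) (ih fun i hi => h i (by simp [hi]))

lemma exists_fine {X : Type*} [MetricSpace X] [CompactSpace X] [MeasurableSpace X] [BorelSpace X]
    (μ : Measure X) [IsFiniteMeasure μ] {ε : ℝ} (hε : 0 < ε) :
    ∃ (m : ℕ) (P : X → Fin m), Measurable P ∧ (∀ x y, P x = P y → dist x y < ε) ∧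
      ∀ i, μ (frontier (P ⁻¹' {i})) = 0 := by
  have h : ∀ x : X, ∃ U : Set X, IsOpen U ∧ x ∈ U ∧ (∀ y ∈ U, ∀ z ∈ U, dist y z < ε) ∧
      μ (frontier U) = 0 := by
    intro x
    obtain ⟨r, hr, h0⟩ := exists_null_frontier_thickening μ {x} (half_pos hε)
    rw [Metric.thickening_singleton] at h0
    obtain ⟨r, hr, h0⟩ := exists_null_frontier_thickening μ {x} (half_pos hε)
    obtain ⟨r, hr, h0⟩ := exists_null_frontier_thickening μ {x} (show 0 < ε / 2 by linarith)
    rw [Metric.thickening_singleton] at h0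
    refine ⟨Metric.ball x r, Metric.isOpen_ball, Metric.mem_ball_self hr.1, ?_, h0⟩
    intro y hy z hz
    rw [Metric.mem_ball] at hy hz
    have := dist_triangle_right y z x
    linarith [hr.2]
  choose U hUo hxU hUd hUf using h
  obtain ⟨t, ht⟩ := CompactSpace.elim_nhds_subcover U fun x => (hUo x).mem_nhds (hxU x)
  let e := t.equivFin
  let V : Fin t.card → Set X := fun i => U (e.symm i)
  have hne : ∀ x, (Finset.univ.filter (fun i => x ∈ V i)).Nonempty := by
    intro x
    have : x ∈ ⋃ y ∈ t, U y := by rw [ht]; trivial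
    simp only [Set.mem_iUnion] at this
    obtain ⟨y, hy, hxy⟩ := this
    exact ⟨e ⟨y, hy⟩, by simp [V, hxy]⟩
  let P : X → Fin t.card := fun x => (Finset.univ.filter (fun i => x ∈ V i)).min' (hne x)
  have hPV : ∀ x, x ∈ V (P x) := fun x => by
    have := Finset.min'_mem _ (hne x)
    simpa using this
  have hP : ∀ i, P ⁻¹' {i} = V i ∩ ⋂ j ∈ (Finset.univ.filter (· < i)), (V j)ᶜ := by
    intro i
    ext x
    simp only [Set.mem_preimage, Set.mem_singleton_iff, Set.mem_inter_iff, Set.mem_iInter,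
      Finset.mem_filter, Finset.mem_univ, true_and, Set.mem_compl_iff]
    constructor
    · rintro rfl
      refine ⟨hPV x, fun j hj hx => ?_⟩
      exact absurd (Finset.min'_le _ j (by simp [hx])) (not_le.2 hj)
    · rintro ⟨h1, h2⟩
      refine le_antisymm (Finset.min'_le _ i (by simp [h1])) ?_
      by_contra hlt
      exact h2 _ (not_le.1 hlt) (hPV x)
  refine ⟨t.card, P, ?_, ?_, ?_⟩
  · refine measurable_to_countable' fun i => ?_
    rw [hP]
    exact (hUo _).measurableSet.inter (Finset.measurableSet_biInter _ fun j _ =>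
      (hUo _).measurableSet.compl)
  · intro x y hxy
    exact hUd _ x (hPV x) y (hxy ▸ hPV y)
  · intro i
    rw [hP]
    refine null_frontier_inter (hUf _) (null_frontier_biInter _ _ fun j _ => ?_)
    rw [frontier_compl]
    exact hUf _

lemma core' {X : Type*} [MetricSpace X] [CompactSpace X] [m0 : MeasurableSpace X] [BorelSpace X]
    {T : X → X} {μ : Measure X} [IsProbabilityMeasure μ] (hT : MeasurePreserving T μ μ)
    {m : ℕ → ℕ} {P : ∀ j, X → Fin (m j)} (hP : ∀ j, Measurable (P j))
    (hfine : ∀ j x y, P (j + 1) x = P (j + 1) y → dist x y < 1 / ((j : ℝ) + 1))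
    {c : ℝ} (hc : 0 < c) (h : ∀ N, c ≤ ent μ (pw T (P 0) (N + 1)) - ent μ (pw T (P 0) N)) :
    μ {x | ∃ y, y ≠ x ∧ IsAsymptoticPair T x y} ≠ 0 := by
  intro hzero
  have hTm := hT.measurable
  have hsub := subMod_jn hT hP
  obtain ⟨A, hAmono, hAk, hA⟩ := hsub.exists_seq hc (by simpa only [ent_pw hTm hP] using h)
  have hS : Monotone (fun n => blk (A n) 1 n) := fun a b hab =>
    blk_mono (hAmono hab) le_rfl (by omega)
  have hl := levy_jn (μ := μ) hTm hP hS
  have hge : c / 2 ≤ condPartEntropy μ (⨆ n, filt hTm hP hS n) (P 0) :=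
    ge_of_tendsto' hl fun n => hA n n
  set Φ : X → ℕ × ℕ → ℕ := fun x a =>
    if ∃ n, a ∈ blk (A n) 1 n then ((P a.1 (T^[a.2] x) : Fin _) : ℕ) else 0 with hΦ
  have hG : (⨆ n, filt hTm hP hS n) ≤ m0 := iSup_le fun n => (filt hTm hP hS).le n
  have hΦm : Measurable[⨆ n, filt hTm hP hS n] Φ := by
    rw [measurable_iff_comap_le, MeasurableSpace.pi, MeasurableSpace.comap_iSup]
    refine iSup_le fun a => ?_
    rw [MeasurableSpace.comap_comp, ← measurable_iff_comap_le]
    by_cases ha : ∃ n, a ∈ blk (A n) 1 n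
    · obtain ⟨n, hn⟩ := ha
      have h1 : MeasurableSpace.comap (fun x => P a.1 (T^[a.2] x)) ⊤ ≤ ⨆ n, filt hTm hP hS n :=
        le_trans ((filt_le_iff hTm hP hS n).1 le_rfl a hn) (le_iSup (fun n => filt hTm hP hS n) n)
      have h2 := measurable_iff_comap_le.2 h1
      have h3 : ((fun b => b a) ∘ Φ) = (fun i : Fin (m a.1) => (i : ℕ)) ∘
          (fun x => P a.1 (T^[a.2] x)) := by
        funext x
        simp only [hΦ, Function.comp]
        rw [if_pos ⟨n, hn⟩]
      rw [h3]
      exact Measurable.comp measurable_from_top h2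
    · have h3 : ((fun b => b a) ∘ Φ) = fun _ => 0 := by
        funext x
        simp only [hΦ, Function.comp]
        rw [if_neg ha]
      rw [h3]
      exact measurable_const
  have hasym : ∀ x y, Φ x = Φ y → IsAsymptoticPair T x y := by
    intro x y hxy
    have key : ∀ j : ℕ, ∃ K, ∀ n ≥ K, dist (T^[n] x) (T^[n] y) < 1 / ((j : ℝ) + 1) := by
      intro j
      obtain ⟨K, hK⟩ := hAk (j + 1)
      refine ⟨K + 1, fun n hn => hfine j _ _ ?_⟩
      have hmem : ∃ N, (j + 1, n) ∈ blk (A N) 1 N := by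
        refine ⟨n + j + 1, mem_blk.2 ⟨K, n - K, hAmono (by omega) hK, by omega, by omega, ?_⟩⟩
        simp only; omega
      have := congrFun hxy (j + 1, n)
      simp only [hΦ, if_pos hmem] at this
      exact Fin.ext this
    unfold IsAsymptoticPair
    rw [Metric.tendsto_atTop]
    intro ε hε
    obtain ⟨j, hj⟩ := exists_nat_one_div_lt hε
    obtain ⟨K, hK⟩ := key j
    refine ⟨K, fun n hn => ?_⟩
    rw [Real.dist_eq, sub_zero, abs_of_nonneg dist_nonneg]
    exact (hK n hn).trans hj
  set B : Set X := (toMeasurable μ {x | ∃ y, y ≠ x ∧ IsAsymptoticPair T x y})ᶜ with hB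
  have hBm : MeasurableSet B := (measurableSet_toMeasurable _ _).compl
  have hB0 : μ Bᶜ = 0 := by rw [hB, compl_compl, measure_toMeasurable, hzero]
  have hBinj : InjOn Φ B := by
    intro x hx y _ hxy
    by_contra hne
    exact hx (subset_toMeasurable _ _ ⟨y, fun h => hne h.symm, hasym x y hxy⟩)
  have hz : condPartEntropy μ (⨆ n, filt hTm hP hS n) (P 0) = 0 := by
    refine condPart_zero hG fun i => ?_
    have hD : MeasurableSet (P 0 ⁻¹' {i} ∩ B) := (hP 0 (measurableSet_singleton i)).inter hBm
    have hΦm0 : Measurable Φ := hΦm.mono hG le_rfl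
    have him : MeasurableSet (Φ '' (P 0 ⁻¹' {i} ∩ B)) :=
      hD.image_of_measurable_injOn hΦm0 (hBinj.mono Set.inter_subset_right)
    refine ⟨Φ ⁻¹' (Φ '' (P 0 ⁻¹' {i} ∩ B)), hΦm him, ?_⟩
    have hBae : ∀ᵐ x ∂μ, x ∈ B := by rwa [ae_iff]
    filter_upwards [hBae] with x hx
    apply propext
    show x ∈ Φ ⁻¹' (Φ '' (P 0 ⁻¹' {i} ∩ B)) ↔ x ∈ P 0 ⁻¹' {i}
    constructor
    · rintro ⟨y, ⟨hy1, hy2⟩, hxy⟩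
      rw [← hBinj hy2 hx hxy]; exact hy1
    · intro hxi
      exact ⟨x, ⟨hxi, hx⟩, rfl⟩
  rw [hz] at hge
  linarith

lemma core {X : Type*} [MetricSpace X] [CompactSpace X] [MeasurableSpace X] [BorelSpace X]
    {T : X → X} {μ : Measure X} [IsProbabilityMeasure μ] (hT : MeasurePreserving T μ μ)
    {k : ℕ} {p : X → Fin k} (hp : Measurable p)
    {c : ℝ} (hc : 0 < c) (h : ∀ N, c ≤ ent μ (pw T p (N + 1)) - ent μ (pw T p N)) :
    μ {x | ∃ y, y ≠ x ∧ IsAsymptoticPair T x y} ≠ 0 := by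
  have hf : ∀ j : ℕ, ∃ (m : ℕ) (P : X → Fin m), Measurable P ∧
      (∀ x y, P x = P y → dist x y < 1 / ((j : ℝ) + 1)) := fun j => by
    obtain ⟨m, P, h1, h2, -⟩ := exists_fine μ (show 0 < 1 / ((j : ℝ) + 1) by positivity)
    exact ⟨m, P, h1, h2⟩
  choose M Q hQ1 hQ2 using hf
  let R : ℕ → Σ n : ℕ, X → Fin n := fun j => Nat.casesOn j ⟨k, p⟩ (fun j => ⟨M j, Q j⟩)
  refine core' hT (m := fun j => (R j).1) (P := fun j => (R j).2) ?_ ?_ hc h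
  · intro j
    cases j with
    | zero => exact hp
    | succ j => exact hQ1 j
  · intro j
    exact hQ2 j

lemma outer_one {X : Type*} [MetricSpace X] [MeasurableSpace X]
    {T : X ≃ X} {μ : Measure X} [IsProbabilityMeasure μ] (hT : Ergodic T μ)
    (h : μ {x | ∃ y, y ≠ x ∧ IsAsymptoticPair T x y} ≠ 0) :
    μ {x | ∃ y, y ≠ x ∧ IsAsymptoticPair T x y} = 1 := by
  set S := {x | ∃ y, y ≠ x ∧ IsAsymptoticPair T x y} with hS
  have hinv : S ⊆ T ⁻¹' S := by
    rintro x ⟨y, hy, hxy⟩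
    refine ⟨T y, fun h => hy (T.injective h), ?_⟩
    have := (tendsto_add_atTop_iff_nat 1).2 hxy
    exact this
  have hm := measurableSet_toMeasurable μ S
  have hsub : S ⊆ toMeasurable μ S ∩ T ⁻¹' toMeasurable μ S := fun x hx =>
    ⟨subset_toMeasurable _ _ hx, subset_toMeasurable _ _ (hinv hx)⟩
  have hle : toMeasurable μ S ≤ᵐ[μ] T ⁻¹' toMeasurable μ S := by
    have h1 : μ (toMeasurable μ S) ≤ μ (toMeasurable μ S ∩ T ⁻¹' toMeasurable μ S) := by
      rw [measure_toMeasurable]; exact measure_mono hsub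
    have h2 : (toMeasurable μ S ∩ T ⁻¹' toMeasurable μ S : Set X) =ᵐ[μ] toMeasurable μ S :=
      ae_eq_of_subset_of_measure_ge Set.inter_subset_left h1
        (hm.inter (hT.measurable hm)).nullMeasurableSet (measure_ne_top _ _)
    exact h2.symm.le.trans (Eventually.of_forall fun x hx => hx.2)
  rcases hT.ae_empty_or_univ_of_ae_le_preimage hm.nullMeasurableSet hle with h' | h'
  · exact absurd (by rw [← measure_toMeasurable, measure_congr h', measure_empty]) h
  · rw [← measure_toMeasurable, measure_congr h', measure_univ]

end APE

namespace APE

/-- Separated sets of exponential size. -/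
lemma exists_nets {X : Type*} [MetricSpace X] {T : X → X}
    (h : 0 < Dynamics.coverEntropy T Set.univ) :
    ∃ ε : ℝ, 0 < ε ∧ ∃ a : ℝ, 0 < a ∧ ∀ N : ℕ, ∃ n, N < n ∧ ∃ E : Finset X,
      a * n ≤ Real.log E.card ∧
      ∀ x ∈ E, ∀ y ∈ E, (∀ i < n, dist (T^[i] x) (T^[i] y) < ε) → x = y := by
  rw [Dynamics.coverEntropy_eq_iSup_basis_netEntropyEntourage Metric.uniformity_basis_dist] at h
  simp only [lt_iSup_iff] at h
  obtain ⟨ε, hε, h⟩ := h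
  obtain ⟨b, hb0, hb⟩ := EReal.lt_iff_exists_real_btwn.1 h
  have hb0 : 0 < b := by exact_mod_cast hb0
  refine ⟨ε, hε, b / 2, by positivity, fun N => ?_⟩
  have hf := ExpGrowth.frequently_exp_le hb
  obtain ⟨n, hn, hN⟩ := (hf.and_eventually (eventually_gt_atTop N)).exists
  refine ⟨n, hN, ?_⟩
  have hn0 : (0 : ℝ) < n := by exact_mod_cast (Nat.zero_le N).trans_lt hN
  have hex : EReal.exp ((b : EReal) * (n : EReal)) = ENNReal.ofReal (Real.exp (b * n)) := by
    rw [← EReal.exp_coe]; push_cast; rfl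
  rw [hex] at hn
  by_contra hcon
  push Not at hcon
  have key : ∀ s : Finset X, Dynamics.IsDynNetIn T univ {p : X × X | dist p.1 p.2 < ε} n s →
      s.card ≤ ⌊Real.exp (b / 2 * n)⌋₊ := by
    intro s hs
    by_contra hc
    push Not at hc
    rw [Nat.floor_lt (Real.exp_pos _).le] at hc
    obtain ⟨x, hx, y, hy, hxy, hne⟩ := hcon s (by
      rw [Real.le_log_iff_exp_le ((Real.exp_pos _).trans hc)]; exact hc.le)
    refine hne (hs.2.elim_set hx hy y ?_ ?_)
    · rw [Dynamics.mem_ball_dynEntourage]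
      intro k hk
      exact hxy k hk
    · rw [Dynamics.mem_ball_dynEntourage]
      intro k hk
      simp [UniformSpace.ball, hε]
  have h2 : Dynamics.netMaxcard T univ {p : X × X | dist p.1 p.2 < ε} n ≤
      (⌊Real.exp (b / 2 * n)⌋₊ : ℕ∞) := iSup₂_le fun s hs => by exact_mod_cast key s hs
  have h3 : ((Dynamics.netMaxcard T univ {p : X × X | dist p.1 p.2 < ε} n : ℕ∞) : ℝ≥0∞) ≤
      ((⌊Real.exp (b / 2 * n)⌋₊ : ℕ∞) : ℝ≥0∞) := by exact_mod_cast h2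
  have h4 := hn.trans h3
  have h5 : ((⌊Real.exp (b / 2 * n)⌋₊ : ℕ∞) : ℝ≥0∞) ≤ ENNReal.ofReal (Real.exp (b / 2 * n)) := by
    rw [ENat.toENNReal_coe, ← ENNReal.ofReal_natCast]
    exact ENNReal.ofReal_le_ofReal (Nat.floor_le (Real.exp_pos _).le)
  have h6 := h4.trans h5
  rw [ENNReal.ofReal_le_ofReal_iff (Real.exp_pos _).le, Real.exp_le_exp] at h6
  nlinarith

section
variable {X : Type*} [MeasurableSpace X] {μ : Measure X}
  {ι κ : Type*} [Fintype ι] [MeasurableSpace ι] [MeasurableSingletonClass ι]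
  [Fintype κ] [MeasurableSpace κ] [MeasurableSingletonClass κ]

lemma sum_fibers [IsProbabilityMeasure μ] {f : X → ι} (hf : Measurable f) :
    ∑ i, μ.real (f ⁻¹' {i}) = 1 := by
  have := real_preimage_comp (μ := μ) hf Set.univ
  simpa using this.symm

lemma ent_le_card [IsProbabilityMeasure μ] (f : X → ι) : ent μ f ≤ Fintype.card ι := by
  unfold ent
  calc _ ≤ ∑ i : ι, (1 : ℝ) := by
        refine Finset.sum_le_sum fun i _ => ?_
        have h0 : 0 ≤ μ.real (f ⁻¹' {i}) := measureReal_nonneg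
        rcases h0.eq_or_lt with h | h
        · simp [← h]
        · have := Real.one_sub_inv_le_log_of_pos h
          have h2 := mul_le_mul_of_nonneg_left this h0
          rw [mul_sub, mul_inv_cancel₀ h.ne'] at h2
          rw [Real.negMulLog]; linarith
    _ = _ := by simp

lemma ent_nonneg [IsProbabilityMeasure μ] (f : X → ι) : 0 ≤ ent μ f :=
  Finset.sum_nonneg fun _ _ => Real.negMulLog_nonneg measureReal_nonneg measureReal_le_one

lemma ent_subadd [IsProbabilityMeasure μ] {f : X → ι} {g : X → κ} (hf : Measurable f)
    (hg : Measurable g) : ent μ (fun x => (f x, g x)) ≤ ent μ f + ent μ g := by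
  have hu : Measurable (fun _ : X => ()) := measurable_const
  have h := ent_submod (μ := μ) hf hg hu
  have e1 : ent μ (fun x => (f x, g x)) ≤ ent μ (fun x => (f x, g x, ())) :=
    ent_le_of_det (hf.prodMk (hg.prodMk hu)) (by simp)
  have e2 : ent μ (fun x => (f x, ())) ≤ ent μ f := ent_le_of_det hf (by simp)
  have e3 : ent μ (fun x => (g x, ())) ≤ ent μ g := ent_le_of_det hg (by simp)
  have := ent_nonneg (μ := μ) (fun _ : X => ())
  linarith

lemma log_le_ent [IsProbabilityMeasure μ] {f : X → ι} (hf : Measurable f) {M : ℝ} (hM : 0 < M)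
    (h : ∀ i, μ.real (f ⁻¹' {i}) ≤ 1 / M) : Real.log M ≤ ent μ f := by
  calc Real.log M = ∑ i, μ.real (f ⁻¹' {i}) * Real.log M := by
        rw [← Finset.sum_mul, sum_fibers hf, one_mul]
    _ ≤ _ := by
        refine Finset.sum_le_sum fun i _ => ?_
        have h0 : 0 ≤ μ.real (f ⁻¹' {i}) := measureReal_nonneg
        rcases h0.eq_or_lt with h' | h'
        · simp [← h']
        · have h3 := Real.log_le_log h' (h i)
          rw [one_div, Real.log_inv] at h3
          rw [Real.negMulLog]
          nlinarith

lemma ent_pw_add [IsProbabilityMeasure μ] {T : X → X} (hT : Measurable T) {k : ℕ}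
    {p : X → Fin k} (hp : Measurable p) (a m : ℕ) :
    ent μ (pw T p (a + m)) ≤ ent μ (pw T p a) + ent μ (pw T p m ∘ T^[a]) := by
  refine le_trans ?_ (ent_subadd (pw_measurable hT hp a)
    ((pw_measurable hT hp m).comp (hT.iterate a)))
  refine ent_le_of_det ((pw_measurable hT hp a).prodMk
    ((pw_measurable hT hp m).comp (hT.iterate a))) fun x y hxy => ?_
  simp only [Prod.mk.injEq, pw, funext_iff, Function.comp_apply, ← Function.iterate_add_apply] at hxy
  funext i
  simp only [pw]
  by_cases hi : (i : ℕ) < a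
  · exact hxy.1 ⟨i, hi⟩
  · have := hxy.2 ⟨i - a, by omega⟩
    have e : (i : ℕ) - a + a = i := by omega
    simpa only [e] using this

lemma ent_pw_mono [IsProbabilityMeasure μ] {T : X → X} (hT : Measurable T) {k : ℕ}
    {p : X → Fin k} (hp : Measurable p) {a m : ℕ} (h : a ≤ m) :
    ent μ (pw T p a) ≤ ent μ (pw T p m) := by
  refine ent_le_of_det (pw_measurable hT hp m) fun x y hxy => ?_
  funext i
  exact congrFun hxy ⟨i, i.2.trans_le h⟩

lemma ent_pw_blocks [IsProbabilityMeasure μ] {T : X → X} (hT : Measurable T) {k : ℕ}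
    {p : X → Fin k} (hp : Measurable p) (j q R : ℕ) :
    ent μ (pw T p (j + q * R)) ≤ ent μ (pw T p j) +
      ∑ r ∈ Finset.range R, ent μ (pw T p q ∘ T^[j + q * r]) := by
  induction R with
  | zero => simp
  | succ R ih =>
    rw [Finset.sum_range_succ, Nat.mul_succ, ← add_assoc]
    have := ent_pw_add (μ := μ) hT hp (j + q * R) q
    linarith

lemma sum_blocks (a : ℕ → ℝ) (q R : ℕ) :
    ∑ j ∈ Finset.range q, ∑ r ∈ Finset.range R, a (j + q * r) =
      ∑ i ∈ Finset.range (q * R), a i := by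
  rw [Finset.sum_comm]
  induction R with
  | zero => simp
  | succ R ih =>
    rw [Finset.sum_range_succ, ih, Nat.mul_succ, Finset.sum_range_add]
    simp only [add_comm]

lemma misiu [IsProbabilityMeasure μ] {T : X → X} (hT : Measurable T) {k : ℕ}
    {p : X → Fin k} (hp : Measurable p) {q : ℕ} (hq : 0 < q) (n : ℕ) :
    q * ent μ (pw T p n) ≤ ∑ i ∈ Finset.range n, ent μ (pw T p q ∘ T^[i]) +
      2 * q * Fintype.card (Fin q → Fin k) := by
  set C : ℝ := ((Fintype.card (Fin q → Fin k) : ℕ) : ℝ)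
  have hC : ∀ i, ent μ (pw T p q ∘ T^[i]) ≤ C := fun i => ent_le_card _
  have h1 : ∀ j ∈ Finset.range q, ent μ (pw T p n) ≤ C +
      ∑ r ∈ Finset.range (n / q + 1), ent μ (pw T p q ∘ T^[j + q * r]) := by
    intro j hj
    rw [Finset.mem_range] at hj
    have hn : n ≤ j + q * (n / q + 1) := by
      have := Nat.lt_mul_div_succ n hq
      omega
    have e1 := ent_pw_mono (μ := μ) hT hp hn
    have e2 := ent_pw_blocks (μ := μ) hT hp j q (n / q + 1)
    have e3 := ent_pw_mono (μ := μ) hT hp hj.le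
    have e4 : ent μ (pw T p q) ≤ C := ent_le_card _
    linarith
  have h2 := Finset.sum_le_sum h1
  rw [Finset.sum_add_distrib, sum_blocks (fun i => ent μ (pw T p q ∘ T^[i]))] at h2
  simp only [Finset.sum_const, Finset.card_range, nsmul_eq_mul] at h2
  obtain ⟨d, hd⟩ : ∃ d, q * (n / q + 1) = n + d := by
    have := Nat.lt_mul_div_succ n hq
    exact ⟨q * (n / q + 1) - n, by omega⟩
  have hdq : d ≤ q := by
    have := Nat.mul_div_le n q
    rw [Nat.mul_succ] at hd
    omega
  rw [hd, Finset.sum_range_add] at h2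
  have h3 : ∑ x ∈ Finset.range d, ent μ (pw T p q ∘ T^[n + x]) ≤ q * C := by
    calc _ ≤ ∑ x ∈ Finset.range d, C := Finset.sum_le_sum fun i _ => hC _
      _ = d * C := by simp
      _ ≤ q * C := by
        have : (0 : ℝ) ≤ C := Nat.cast_nonneg _
        gcongr
  linarith

lemma ent_concave {ν : Measure X} {T : X → X} {f : X → ι} {n : ℕ} (hn : 0 < n)
    (h : ∀ i, ν.real (f ⁻¹' {i}) =
      (n : ℝ)⁻¹ * ∑ j ∈ Finset.range n, μ.real ((f ∘ T^[j]) ⁻¹' {i})) :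
    ∑ j ∈ Finset.range n, ent μ (f ∘ T^[j]) ≤ n * ent ν f := by
  have hn' : (0 : ℝ) < n := by exact_mod_cast hn
  unfold ent
  rw [Finset.sum_comm, Finset.mul_sum]
  refine Finset.sum_le_sum fun i _ => ?_
  rw [h i]
  have := Real.concaveOn_negMulLog.le_map_sum (t := Finset.range n) (w := fun _ => (n : ℝ)⁻¹)
    (p := fun j => μ.real ((f ∘ T^[j]) ⁻¹' {i})) (fun _ _ => by positivity)
    (by simp [hn'.ne']) (fun _ _ => measureReal_nonneg)
  simp only [smul_eq_mul, ← Finset.mul_sum] at this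
  calc _ = n * ((n : ℝ)⁻¹ * ∑ j ∈ Finset.range n, (μ.real ((f ∘ T^[j]) ⁻¹' {i})).negMulLog) := by
        field_simp
    _ ≤ _ := by gcongr

end

end APE

namespace APE

lemma uniform_fiber {X : Type*} [MeasurableSpace X] [MeasurableSingletonClass X] (E : Finset X)
    (hE : E.Nonempty) (A : Set X) (h : ∀ x ∈ E, ∀ y ∈ E, x ∈ A → y ∈ A → x = y) :
    (ProbabilityTheory.uniformOn (E : Set X)).real A ≤ 1 / E.card := by
  have hc : (0 : ℝ) < E.card := by exact_mod_cast hE.card_pos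
  have h1 : Measure.count ((E : Set X) ∩ A) ≤ 1 := by
    have e : (E : Set X) ∩ A = ((E.filter (· ∈ A) : Finset X) : Set X) := by ext; simp
    rw [e, Measure.count_apply_finset]
    have : (E.filter (· ∈ A)).card ≤ 1 := by
      rw [Finset.card_le_one]
      intro a ha b hb
      simp only [Finset.mem_filter] at ha hb
      exact h a ha.1 b hb.1 ha.2 hb.2
    exact_mod_cast this
  have h2 : ProbabilityTheory.uniformOn (E : Set X) A ≤ (E.card : ℝ≥0∞)⁻¹ := by
    rw [ProbabilityTheory.uniformOn, ProbabilityTheory.cond_apply E.measurableSet,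
      Measure.count_apply_finset]
    calc _ ≤ (E.card : ℝ≥0∞)⁻¹ * 1 := by gcongr
      _ = _ := mul_one _
  rw [measureReal_def]
  refine (ENNReal.toReal_mono (by simpa using hE.ne_empty) h2).trans ?_
  simp

/-- Orbit averages. -/
noncomputable def avg {X : Type*} [MeasurableSpace X] (σ : Measure X) (T : X → X) (n : ℕ) :
    Measure X := (n : ℝ≥0∞)⁻¹ • ∑ j ∈ Finset.range n, σ.map T^[j]

section
variable {X : Type*} [MeasurableSpace X] {σ : Measure X} [IsProbabilityMeasure σ] {T : X → X}

lemma avg_apply (hT : Measurable T) (n : ℕ) {A : Set X} (hA : MeasurableSet A) :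
    avg σ T n A = (n : ℝ≥0∞)⁻¹ * ∑ j ∈ Finset.range n, σ (T^[j] ⁻¹' A) := by
  simp only [avg, Measure.smul_apply, Measure.finsetSum_apply, smul_eq_mul]
  congr 1
  exact Finset.sum_congr rfl fun j _ => Measure.map_apply (hT.iterate j) hA

lemma avg_real (hT : Measurable T) (n : ℕ) {A : Set X} (hA : MeasurableSet A) :
    (avg σ T n).real A = (n : ℝ)⁻¹ * ∑ j ∈ Finset.range n, σ.real (T^[j] ⁻¹' A) := by
  rw [measureReal_def, avg_apply hT n hA, ENNReal.toReal_mul,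
    ENNReal.toReal_sum (fun _ _ => measure_ne_top _ _)]
  simp [measureReal_def]

lemma avg_prob (hT : Measurable T) {n : ℕ} (hn : 0 < n) : IsProbabilityMeasure (avg σ T n) := by
  constructor
  rw [avg_apply hT n MeasurableSet.univ]
  simp only [preimage_univ, measure_univ, Finset.sum_const, Finset.card_range, nsmul_eq_mul, mul_one]
  exact ENNReal.inv_mul_cancel (by exact_mod_cast hn.ne') (by simp)

lemma avg_integral (hT : Measurable T) (n : ℕ) {f : X → ℝ} (hf : Measurable f) {C : ℝ}
    (hb : ∀ x, |f x| ≤ C) :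
    ∫ x, f x ∂(avg σ T n) = (n : ℝ)⁻¹ * ∑ j ∈ Finset.range n, ∫ x, f (T^[j] x) ∂σ := by
  rw [avg, integral_smul_measure, integral_finsetSum_measure]
  · simp only [ENNReal.toReal_inv, ENNReal.toReal_natCast, smul_eq_mul]
    congr 1
    refine Finset.sum_congr rfl fun j _ => ?_
    rw [integral_map (hT.iterate j).aemeasurable hf.aestronglyMeasurable]
  · intro j _
    haveI := Measure.isProbabilityMeasure_map (μ := σ) (hT.iterate j).aemeasurable
    exact Integrable.of_bound hf.aestronglyMeasurable C (Eventually.of_forall hb)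

lemma avg_almost_inv (hT : Measurable T) (n : ℕ) {f : X → ℝ} (hf : Measurable f) {C : ℝ}
    (hb : ∀ x, |f x| ≤ C) :
    |∫ x, f (T x) ∂(avg σ T n) - ∫ x, f x ∂(avg σ T n)| ≤ (n : ℝ)⁻¹ * (2 * C) := by
  rw [avg_integral hT n hf hb, avg_integral (f := fun x => f (T x)) hT n (hf.comp hT) (fun x => hb (T x)), ← mul_sub,
    ← Finset.sum_sub_distrib]
  have e : ∀ j, ∫ x, f (T (T^[j] x)) ∂σ = ∫ x, f (T^[j + 1] x) ∂σ := fun j => by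
    simp only [Function.iterate_succ_apply']
  simp only [e]
  rw [Finset.sum_range_sub (fun j => ∫ x, f (T^[j] x) ∂σ), abs_mul, abs_of_nonneg (by positivity)]
  gcongr
  have hbd : ∀ j, |∫ x, f (T^[j] x) ∂σ| ≤ C := fun j => by
    have := norm_integral_le_of_norm_le_const (μ := σ) (f := fun x => f (T^[j] x)) (C := C)
      (Eventually.of_forall fun x => hb _)
    simpa using this
  calc _ ≤ |∫ x, f (T^[n] x) ∂σ| + |∫ x, f (T^[0] x) ∂σ| := abs_sub _ _
    _ ≤ 2 * C := by linarith [hbd n, hbd 0]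

end

lemma inv_limit {X : Type*} [MetricSpace X] [CompactSpace X] [MeasurableSpace X] [BorelSpace X]
    {T : X → X} (hT : Continuous T) {L : Filter ℕ} [L.NeBot] {n : ℕ → ℕ} (hn : Tendsto n L atTop)
    {σ : ℕ → Measure X} (hσ : ∀ N, IsProbabilityMeasure (σ N)) {ν : ℕ → ProbabilityMeasure X}
    (hν : ∀ N, (ν N : Measure X) = avg (σ N) T (n N)) {μ : ProbabilityMeasure X}
    (hl : Tendsto ν L (𝓝 μ)) : MeasurePreserving T (μ : Measure X) μ := by
  refine ⟨hT.measurable, ?_⟩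
  haveI := Measure.isProbabilityMeasure_map (μ := (μ : Measure X)) hT.measurable.aemeasurable
  refine ext_of_forall_integral_eq_of_IsFiniteMeasure fun f => ?_
  rw [integral_map hT.measurable.aemeasurable f.continuous.measurable.aestronglyMeasurable]
  rw [ProbabilityMeasure.tendsto_iff_forall_integral_tendsto] at hl
  have h1 := hl f
  have h2 := hl (f.compContinuous ⟨T, hT⟩)
  have h3 := h2.sub h1
  have h4 : Tendsto (fun N => ∫ x, (f.compContinuous ⟨T, hT⟩) x ∂(ν N : Measure X) -
      ∫ x, f x ∂(ν N : Measure X)) L (𝓝 0) := by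
    refine squeeze_zero_norm (a := fun N => ((n N : ℕ) : ℝ)⁻¹ * (2 * ‖f‖)) (fun N => ?_) ?_
    · rw [hν N]
      exact avg_almost_inv hT.measurable _ f.continuous.measurable (C := ‖f‖)
        (fun x => f.norm_coe_le_norm x)
    · have := (tendsto_inv_atTop_zero.comp (tendsto_natCast_atTop_atTop (R := ℝ))).comp hn
      simpa using this.mul_const (2 * ‖f‖)
  have := tendsto_nhds_unique h3 h4
  exact sub_eq_zero.1 this

lemma pw_frontier {X : Type*} [TopologicalSpace X] [MeasurableSpace X] [BorelSpace X] {μ : Measure X}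
    {T : X ≃ₜ X} (hT : MeasurePreserving T μ μ) {k : ℕ} {p : X → Fin k}
    (h : ∀ i, μ (frontier (p ⁻¹' {i})) = 0) (q : ℕ) (w : Fin q → Fin k) :
    μ (frontier (pw T p q ⁻¹' {w})) = 0 := by
  have e : pw T p q ⁻¹' {w} = ⋂ i ∈ (Finset.univ : Finset (Fin q)), (⇑T)^[i] ⁻¹' (p ⁻¹' {w i}) := by
    ext x; simp [pw, funext_iff]
  rw [e]
  refine null_frontier_biInter _ _ fun i _ => ?_
  have hi : ∀ (j : ℕ) (A : Set X), frontier ((⇑T)^[j] ⁻¹' A) = (⇑T)^[j] ⁻¹' frontier A := by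
    intro j
    induction j with
    | zero => intro A; rfl
    | succ j ih =>
      intro A
      rw [Function.iterate_succ', preimage_comp, ih, ← T.preimage_frontier, ← preimage_comp]
  rw [hi, (hT.iterate i).measure_preimage isClosed_frontier.measurableSet.nullMeasurableSet, h]

lemma half_vp {X : Type*} [MetricSpace X] [CompactSpace X] [MeasurableSpace X] [BorelSpace X]
    (T : X ≃ₜ X) (h : 0 < Dynamics.coverEntropy (⇑T) Set.univ) :
    ∃ μ : Measure X, IsProbabilityMeasure μ ∧ MeasurePreserving (⇑T) μ μ ∧
      ∃ (k : ℕ) (p : X → Fin k), Measurable p ∧ ∃ c : ℝ, 0 < c ∧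
        ∀ N, c ≤ ent μ (pw T p (N + 1)) - ent μ (pw T p N) := by
  have hTm : Measurable (⇑T) := T.continuous.measurable
  obtain ⟨ε, hε, a, ha, hnet⟩ := exists_nets h
  choose n hn E hE hsep using hnet
  have hn0 : ∀ N, 0 < n N := fun N => (Nat.zero_le N).trans_lt (hn N)
  have hEne : ∀ N, (E N).Nonempty := by
    intro N
    by_contra hc
    rw [Finset.not_nonempty_iff_eq_empty] at hc
    have h1 := hE N
    have h2 : (0 : ℝ) < n N := by exact_mod_cast hn0 N
    rw [hc] at h1
    simp at h1
    nlinarith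
  let σ : ℕ → Measure X := fun N => ProbabilityTheory.uniformOn (E N : Set X)
  have hσ : ∀ N, IsProbabilityMeasure (σ N) := fun N =>
    ProbabilityTheory.isProbabilityMeasure_uniformOn (E N).finite_toSet (by simpa using hEne N)
  let ν : ℕ → ProbabilityMeasure X := fun N => ⟨avg (σ N) T (n N), avg_prob hTm (hn0 N)⟩
  have hν : ∀ N, (ν N : Measure X) = avg (σ N) T (n N) := fun N => rfl
  let L : Ultrafilter ℕ := Ultrafilter.of atTop
  have hL : (L : Filter ℕ) ≤ atTop := Ultrafilter.of_le _
  obtain ⟨μ, -, hμ⟩ := isCompact_univ.ultrafilter_le_nhds (L.map ν) (by simp)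
  have hlim : Tendsto ν L (𝓝 μ) := hμ
  have hnt : Tendsto n L atTop :=
    (tendsto_atTop_mono (fun N => (hn N).le) tendsto_id).mono_left hL
  have hinv := inv_limit T.continuous hnt hσ hν hlim
  obtain ⟨k, p, hp, hpd, hpf⟩ := exists_fine (μ : Measure X) hε
  refine ⟨μ, inferInstance, hinv, k, p, hp, ?_⟩
  have hent : ∀ q, 0 < q → q * a ≤ ent (μ : Measure X) (pw T p q) := by
    intro q hq
    set C : ℝ := 2 * q * ((Fintype.card (Fin q → Fin k) : ℕ) : ℝ)
    have hmain : ∀ N, q * a ≤ ent (ν N : Measure X) (pw T p q) + ((n N : ℕ) : ℝ)⁻¹ * C := by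
      intro N
      haveI := hσ N
      have hnN : (0 : ℝ) < n N := by exact_mod_cast hn0 N
      have h1 : Real.log (E N).card ≤ ent (σ N) (pw T p (n N)) := by
        refine log_le_ent (pw_measurable hTm hp _) (by exact_mod_cast (hEne N).card_pos) fun w => ?_
        refine uniform_fiber _ (hEne N) _ fun x hx y hy hxw hyw => ?_
        refine hsep N x hx y hy fun i hi => hpd _ _ ?_
        have hxy : pw T p (n N) x = pw T p (n N) y := by
          rw [mem_preimage, mem_singleton_iff] at hxw hyw
          rw [hxw, hyw]
        exact congrFun hxy ⟨i, hi⟩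
      have h2 := misiu (μ := σ N) hTm hp hq (n N)
      have h3 := ent_concave (μ := σ N) (ν := (ν N : Measure X)) (T := T) (f := pw T p q) (hn0 N)
        (fun w => by
          rw [hν N, avg_real hTm _ (pw_measurable hTm hp q (measurableSet_singleton w))]
          rfl)
      have h4 : (q : ℝ) * (a * n N) ≤ n N * ent (ν N : Measure X) (pw T p q) + C :=
        calc (q : ℝ) * (a * n N) ≤ q * ent (σ N) (pw T p (n N)) := by
              gcongr; exact (hE N).trans h1
          _ ≤ _ := by linarith
      have h5 := mul_le_mul_of_nonneg_left h4 (inv_nonneg.2 hnN.le)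
      have e1 : ((n N : ℕ) : ℝ)⁻¹ * (q * (a * n N)) = q * a := by field_simp
      have e2 : ((n N : ℕ) : ℝ)⁻¹ * (n N * ent (ν N : Measure X) (pw T p q) + C) =
        ent (ν N : Measure X) (pw T p q) + ((n N : ℕ) : ℝ)⁻¹ * C := by field_simp
      rwa [e1, e2] at h5
    have hc1 : Tendsto (fun N => ent (ν N : Measure X) (pw T p q)) L
        (𝓝 (ent (μ : Measure X) (pw T p q))) := by
      unfold ent
      refine tendsto_finsetSum _ fun w _ => ?_
      refine (Real.continuous_negMulLog.tendsto _).comp ?_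
      exact (ENNReal.tendsto_toReal (measure_ne_top _ _)).comp
        (ProbabilityMeasure.tendsto_measure_of_null_frontier_of_tendsto' hlim
          (pw_frontier hinv hpf q w))
    have hc2 : Tendsto (fun N => ((n N : ℕ) : ℝ)⁻¹ * C) L (𝓝 0) := by
      have := (tendsto_inv_atTop_zero.comp (tendsto_natCast_atTop_atTop (R := ℝ))).comp hnt
      simpa using this.mul_const C
    have := hc1.add hc2
    rw [add_zero] at this
    exact ge_of_tendsto this (Eventually.of_forall hmain)
  have hP : ∀ j : ℕ, Measurable ((fun _ => p : ∀ j : ℕ, X → Fin k) j) := fun _ => hp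
  obtain ⟨g, hg1, -, hg3⟩ := (subMod_jn hinv (m := fun _ => k) hP).exists_rate {(0, 0)}
  simp only [ent_pw hTm hP] at hg1 hg3
  refine ⟨g, ?_, hg1⟩
  refine ha.trans_le (ge_of_tendsto hg3 ?_)
  filter_upwards [eventually_gt_atTop 0] with q hq
  have hq' : (0 : ℝ) < q := by exact_mod_cast hq
  rw [← div_eq_inv_mul, le_div_iff₀ hq', mul_comm]
  exact hent q hq

end APE

/-- An invertible topological dynamical system with positive topological
entropy has a proper asymptotic pair; more precisely, for every `T`-ergodic Borel
probability measure `μ` with `h_μ(X,T) > 0`, the set of points belonging to a proper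
asymptotic pair has `μ`-measure `1`. -/
theorem positive_entropy_asymptotic_pairs
    {X : Type*} [MetricSpace X] [CompactSpace X] [MeasurableSpace X] [BorelSpace X]
    (T : X ≃ₜ X) :
    (0 < Dynamics.coverEntropy (⇑T) Set.univ →
      ∃ x y : X, x ≠ y ∧ IsAsymptoticPair (⇑T) x y) ∧
    ∀ μ : Measure X, IsProbabilityMeasure μ → Ergodic (⇑T) μ → 0 < ksEntropy μ (⇑T) →
      μ {x : X | ∃ y : X, y ≠ x ∧ IsAsymptoticPair (⇑T) x y} = 1 := by
  constructor
  · intro h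
    obtain ⟨μ, hμ, hT, k, p, hp, c, hc, hN⟩ := APE.half_vp T h
    obtain ⟨x, y, hne, hxy⟩ := nonempty_of_measure_ne_zero (APE.core hT hp hc hN)
    exact ⟨x, y, hne.symm, hxy⟩
  · intro μ hμ hT h
    simp only [ksEntropy, lt_iSup_iff, ENNReal.ofReal_pos] at h
    obtain ⟨k, p, hp, hpos⟩ := h
    exact APE.outer_one (T := T.toEquiv) hT
      (APE.core hT.toMeasurePreserving hp hpos
        (fun N => APE.partKS_le hT.toMeasurePreserving hp N))
end

section
/- Let X be a compact metric space and T : X → X a continuous surjection that is not assumed injective. For every T-ergodic Borel probability measure μ on X with h_μ(X,T) > 0, the set of points x ∈ X that belong to a proper asymptotic pair has μ-measure 1. -/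
open MeasureTheory Filter Topology Set
open scoped symmDiff Classical ENNReal NNReal

set_option linter.unusedSectionVars false

section EntropyBasics

variable {X : Type*} {F G : MeasurableSpace X} [m0 : MeasurableSpace X] {μ : Measure X} [IsProbabilityMeasure μ]

/-- conditional probability of a set -/
noncomputable def cprob {X : Type*} [MeasurableSpace X] (μ : Measure X) (F : MeasurableSpace X) (A : Set X) : X → ℝ :=
  μ[A.indicator (fun _ => (1 : ℝ)) | F]

lemma integrable_ind {A : Set X} (hA : MeasurableSet A) :
    Integrable (A.indicator (fun _ => (1 : ℝ))) μ :=
  (integrable_const 1).indicator hA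

variable (F) in
lemma cprob_nonneg (A : Set X) : ∀ᵐ x ∂μ, 0 ≤ cprob μ F A x :=
  condExp_nonneg (Eventually.of_forall fun x => indicator_nonneg (fun _ _ => zero_le_one) x)

lemma cprob_mono {A B : Set X} (hA : MeasurableSet A)
    (hB : MeasurableSet B) (h : A ⊆ B) : ∀ᵐ x ∂μ, cprob μ F A x ≤ cprob μ F B x :=
  condExp_mono (integrable_ind hA) (integrable_ind hB)
    (Eventually.of_forall fun x => indicator_le_indicator_of_subset h (fun _ => zero_le_one) x)

lemma cprob_le_one (hF : F ≤ m0) {A : Set X} (hA : MeasurableSet A) :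
    ∀ᵐ x ∂μ, cprob μ F A x ≤ 1 := by
  have h := condExp_mono (m := F) (integrable_ind (μ := μ) hA) (integrable_const (1 : ℝ))
    (Eventually.of_forall fun x => indicator_le_self' (fun _ _ => zero_le_one) x)
  rw [condExp_const hF] at h
  exact h

variable (F) in
lemma cprob_sm (A : Set X) : StronglyMeasurable[F] (cprob μ F A) :=
  stronglyMeasurable_condExp

lemma integrable_of_unit {f : X → ℝ} (hf : StronglyMeasurable f)
    (h0 : ∀ᵐ x ∂μ, 0 ≤ f x) (h1 : ∀ᵐ x ∂μ, f x ≤ 1) : Integrable f μ := by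
  refine Integrable.of_bound hf.aestronglyMeasurable 1 ?_
  filter_upwards [h0, h1] with x hx0 hx1
  rw [Real.norm_eq_abs, abs_le]; constructor <;> linarith

lemma negMulLog_unit {t : ℝ} (h0 : 0 ≤ t) (h1 : t ≤ 1) :
    0 ≤ Real.negMulLog t ∧ Real.negMulLog t ≤ 1 :=
  ⟨Real.negMulLog_nonneg h0 h1, by have := Real.negMulLog_le_one_sub_self h0; linarith⟩

lemma integrable_nml {f : X → ℝ} (hf : StronglyMeasurable f)
    (h0 : ∀ᵐ x ∂μ, 0 ≤ f x) (h1 : ∀ᵐ x ∂μ, f x ≤ 1) :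
    Integrable (fun x => Real.negMulLog (f x)) μ := by
  refine integrable_of_unit (Real.continuous_negMulLog.comp_stronglyMeasurable hf) ?_ ?_
  · filter_upwards [h0, h1] with x a b using (negMulLog_unit a b).1
  · filter_upwards [h0, h1] with x a b using (negMulLog_unit a b).2

lemma integrable_nml_cprob (hF : F ≤ m0) {A : Set X}
    (hA : MeasurableSet A) : Integrable (fun x => Real.negMulLog (cprob μ F A x)) μ :=
  integrable_nml ((cprob_sm F A).mono hF) (cprob_nonneg F A) (cprob_le_one hF hA)

variable {ι κ : Type*} [Fintype ι] [Fintype κ]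

/-- finite-valued measurable map -/
def FM (p : X → ι) : Prop := ∀ s : Set ι, MeasurableSet (p ⁻¹' s)

lemma FM.le {p : X → ι} (h : FM p) : MeasurableSpace.comap p ⊤ ≤ m0 := by
  rintro _ ⟨s, -, rfl⟩; exact h s

variable (F) in
lemma cpe_def (p : X → ι) :
    condPartEntropy μ F p = ∑ i, ∫ x, Real.negMulLog (cprob μ F (p ⁻¹' {i}) x) ∂μ := rfl

lemma cpe_nonneg (hF : F ≤ m0) {p : X → ι} (hp : FM p) :
    0 ≤ condPartEntropy μ F p := by
  rw [cpe_def]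
  refine Finset.sum_nonneg fun i _ => integral_nonneg_of_ae ?_
  filter_upwards [cprob_nonneg (μ := μ) F (p ⁻¹' {i}), cprob_le_one (μ := μ) hF (hp {i})]
    with x a b using (negMulLog_unit a b).1

lemma cpe_anti (hFG : F ≤ G) (hG : G ≤ m0) {p : X → ι} (hp : FM p) :
    condPartEntropy μ G p ≤ condPartEntropy μ F p := by
  rw [cpe_def, cpe_def]
  refine Finset.sum_le_sum fun i _ => ?_
  have hF := hFG.trans hG
  have hJ := Real.concaveOn_negMulLog.condExp_map_le hF (f := cprob μ G (p ⁻¹' {i}))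
    (Real.continuous_negMulLog.upperSemicontinuous.upperSemicontinuousOn _)
    (cprob_nonneg (μ := μ) G (p ⁻¹' {i})) isClosed_Ici integrable_condExp
    (integrable_nml_cprob hG (hp {i}))
  have ht : μ[cprob μ G (p ⁻¹' {i}) | F] =ᵐ[μ] cprob μ F (p ⁻¹' {i}) :=
    condExp_condExp_of_le hFG hG
  calc ∫ x, Real.negMulLog (cprob μ G (p ⁻¹' {i}) x) ∂μ
      = ∫ x, (μ[Real.negMulLog ∘ cprob μ G (p ⁻¹' {i}) | F]) x ∂μ := (integral_condExp hF).symm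
    _ ≤ _ := by
      refine integral_mono_ae integrable_condExp (integrable_nml_cprob hF (hp {i})) ?_
      filter_upwards [hJ, ht] with x h1 h2
      simpa [h2] using h1

lemma cpe_tendsto {F : ℕ → MeasurableSpace X} (hmono : Monotone F) (hF : ∀ n, F n ≤ m0)
    {p : X → ι} (hp : FM p) :
    Tendsto (fun n => condPartEntropy μ (F n) p) atTop (𝓝 (condPartEntropy μ (⨆ n, F n) p)) := by
  simp_rw [cpe_def]
  refine tendsto_finsetSum _ fun i _ => ?_
  let ℱ : Filtration ℕ m0 := ⟨F, hmono, hF⟩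
  have ht := tendsto_ae_condExp (μ := μ) (ℱ := ℱ)
    ((p ⁻¹' {i}).indicator (fun _ => (1 : ℝ)))
  refine tendsto_integral_of_dominated_convergence (fun _ => 1) ?_ (integrable_const 1) ?_ ?_
  · intro n
    exact (integrable_nml_cprob (hF n) (hp {i})).aestronglyMeasurable
  · intro n
    filter_upwards [cprob_nonneg (μ := μ) (F n) (p ⁻¹' {i}),
      cprob_le_one (μ := μ) (hF n) (hp {i})] with x a b
    rw [Real.norm_eq_abs, abs_of_nonneg (negMulLog_unit a b).1]
    exact (negMulLog_unit a b).2
  · filter_upwards [ht] with x hx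
    exact (Real.continuous_negMulLog.tendsto _).comp hx

variable (F) in
lemma cpe_equiv (p : X → ι) (e : ι ≃ κ) :
    condPartEntropy μ F (fun x => e (p x)) = condPartEntropy μ F p := by
  rw [cpe_def, cpe_def]
  refine (Fintype.sum_equiv e _ _ fun i => ?_).symm
  have : (fun x => e (p x)) ⁻¹' {e i} = p ⁻¹' {i} := by ext x; simp
  rw [this]

lemma cprob_comap {T : X → X} (hT : MeasurePreserving T μ μ)
    (hF : F ≤ m0) {A : Set X} (hA : MeasurableSet A) :
    (fun x => cprob μ F A (T x)) =ᵐ[μ] cprob μ (F.comap T) (T ⁻¹' A) := by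
  have hle : F.comap T ≤ m0 := by
    rintro _ ⟨s, hs, rfl⟩; exact hT.measurable (hF s hs)
  refine ae_eq_condExp_of_forall_setIntegral_eq hle (integrable_ind (hT.measurable hA)) ?_ ?_ ?_
  · intro s _ _
    exact (hT.integrable_comp_of_integrable (g := cprob μ F A) integrable_condExp).integrableOn
  · rintro _ ⟨s, hs, rfl⟩ _
    have h1 := setIntegral_condExp (μ := μ) hF (integrable_ind (μ := μ) hA) hs
    have h2 : ∀ g : X → ℝ, AEStronglyMeasurable g μ →
        ∫ x in T ⁻¹' s, g (T x) ∂μ = ∫ x in s, g x ∂μ := by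
      intro g hg
      rw [← integral_indicator (hT.measurable (hF s hs)), ← integral_indicator (hF s hs)]
      have := integral_map (μ := μ) (φ := T) hT.measurable.aemeasurable (f := s.indicator g)
        (by rw [hT.map_eq]; exact hg.indicator (hF s hs))
      rw [hT.map_eq] at this
      rw [this]; rfl
    rw [h2 (cprob μ F A) integrable_condExp.aestronglyMeasurable]
    have h3 := h2 _ (integrable_ind (μ := μ) hA).aestronglyMeasurable
    refine (h1.trans h3.symm)
  · refine StronglyMeasurable.aestronglyMeasurable ?_
    exact (cprob_sm F A).comp_measurable (fun t ht => ⟨t, ht, rfl⟩)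

lemma cpe_comap {T : X → X} (hT : MeasurePreserving T μ μ)
    (hF : F ≤ m0) {p : X → ι} (hp : FM p) :
    condPartEntropy μ (F.comap T) (fun x => p (T x)) = condPartEntropy μ F p := by
  rw [cpe_def, cpe_def]
  refine Finset.sum_congr rfl fun i _ => ?_
  have h1 := cprob_comap hT hF (hp {i})
  have h2 : ∫ x, Real.negMulLog (cprob μ F (p ⁻¹' {i}) (T x)) ∂μ
      = ∫ x, Real.negMulLog (cprob μ F (p ⁻¹' {i}) x) ∂μ := by
    have := integral_map (μ := μ) (φ := T) hT.measurable.aemeasurable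
      (f := fun x => Real.negMulLog (cprob μ F (p ⁻¹' {i}) x))
      (by rw [hT.map_eq]; exact (integrable_nml_cprob hF (hp {i})).aestronglyMeasurable)
    rw [hT.map_eq] at this
    exact this.symm
  rw [← h2]
  refine integral_congr_ae ?_
  filter_upwards [h1] with x hx
  rw [hx]; rfl

lemma cpe_eq_zero (hF : F ≤ m0) {p : X → ι}
    (h : ∀ i, ∃ B, MeasurableSet[F] B ∧ p ⁻¹' {i} =ᵐ[μ] B) :
    condPartEntropy μ F p = 0 := by
  rw [cpe_def]
  refine Finset.sum_eq_zero fun i _ => ?_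
  obtain ⟨B, hB, hBe⟩ := h i
  have h1 : cprob μ F (p ⁻¹' {i}) =ᵐ[μ] cprob μ F B :=
    condExp_congr_ae (indicator_ae_eq_of_ae_eq_set hBe)
  have h2 : cprob μ F B = B.indicator (fun _ => (1 : ℝ)) :=
    condExp_of_stronglyMeasurable hF (stronglyMeasurable_const.indicator hB)
      (integrable_ind (hF B hB))
  rw [h2] at h1
  rw [← integral_zero X ℝ (μ := μ)]
  refine integral_congr_ae ?_
  filter_upwards [h1] with x hx
  rw [hx]
  by_cases hx : x ∈ B <;> simp [hx]

end EntropyBasics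
section ChainRule

variable {X : Type*} {F G : MeasurableSpace X} [m0 : MeasurableSpace X] {μ : Measure X}
  [IsProbabilityMeasure μ]
variable {ι κ : Type*} [Fintype ι] [Fintype κ]

lemma sup_comap_repr {q : X → κ} {s : Set X}
    (hs : MeasurableSet[F ⊔ MeasurableSpace.comap q ⊤] s) (j : κ) :
    ∃ A, MeasurableSet[F] A ∧ s ∩ q ⁻¹' {j} = A ∩ q ⁻¹' {j} := by
  let M : MeasurableSpace X :=
    { MeasurableSet' := fun s => ∃ A, MeasurableSet[F] A ∧ s ∩ q ⁻¹' {j} = A ∩ q ⁻¹' {j}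
      measurableSet_empty := ⟨∅, @MeasurableSet.empty X F, rfl⟩
      measurableSet_compl := by
        rintro s ⟨A, hA, h⟩
        refine ⟨Aᶜ, hA.compl, ?_⟩
        ext x
        have := Set.ext_iff.1 h x
        simp only [mem_inter_iff, mem_compl_iff] at this ⊢
        tauto
      measurableSet_iUnion := by
        intro f hf
        choose A hA h using hf
        refine ⟨⋃ i, A i, MeasurableSet.iUnion hA, ?_⟩
        rw [iUnion_inter, iUnion_inter]
        exact iUnion_congr h }
  have h1 : F ≤ M := fun t ht => ⟨t, ht, rfl⟩
  have h2 : MeasurableSpace.comap q ⊤ ≤ M := by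
    rintro _ ⟨t, -, rfl⟩
    by_cases hj : j ∈ t
    · refine ⟨univ, @MeasurableSet.univ X F, ?_⟩
      ext x; simp only [mem_inter_iff, mem_preimage, mem_singleton_iff, mem_univ, true_and]
      constructor
      · exact fun h => h.2
      · intro h; exact ⟨h ▸ hj, h⟩
    · refine ⟨∅, @MeasurableSet.empty X F, ?_⟩
      ext x; simp only [mem_inter_iff, mem_preimage, mem_singleton_iff, mem_empty_iff_false,
        false_and, iff_false]
      rintro ⟨h, h'⟩; exact hj (h' ▸ h)
  exact (sup_le h1 h2) s hs

/-- pull-out under the integral -/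
lemma integral_mul_cprob (hF : F ≤ m0) {f : X → ℝ} (hf : StronglyMeasurable[F] f) {C : ℝ}
    (hC : ∀ᵐ x ∂μ, ‖f x‖ ≤ C) {B : Set X} (hB : MeasurableSet B) :
    ∫ x, f x * B.indicator (fun _ => (1 : ℝ)) x ∂μ = ∫ x, f x * cprob μ F B x ∂μ := by
  have h := condExp_stronglyMeasurable_mul_of_bound hF hf (integrable_ind (μ := μ) hB) C hC
  exact (integral_condExp (μ := μ) (f := f * B.indicator (fun _ => (1 : ℝ))) hF).symm.trans
    (integral_congr_ae h)

lemma cond_ratio (hF : F ≤ m0) {A B : Set X} (hA : MeasurableSet A)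
    (hB : MeasurableSet B) (hAB : A ⊆ B) (hG : G ≤ m0) (hFG : F ≤ G) (hBG : MeasurableSet[G] B)
    (hrep : ∀ s, MeasurableSet[G] s → ∃ s', MeasurableSet[F] s' ∧ s ∩ B = s' ∩ B) :
    cprob μ G A =ᵐ[μ] B.indicator (fun x => cprob μ F A x / cprob μ F B x) := by
  have hr : StronglyMeasurable[F] (fun x => cprob μ F A x / cprob μ F B x) :=
    ((cprob_sm F A).measurable.div (cprob_sm F B).measurable).stronglyMeasurable
  have hr1 : ∀ᵐ x ∂μ, ‖cprob μ F A x / cprob μ F B x‖ ≤ 1 := by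
    filter_upwards [cprob_nonneg (μ := μ) F A, cprob_nonneg (μ := μ) F B,
      cprob_mono (μ := μ) (F := F) hA hB hAB] with x h1 h2 h3
    rw [Real.norm_eq_abs, abs_of_nonneg (by positivity)]
    exact div_le_one_of_le₀ h3 h2
  have hIntg : Integrable (B.indicator (fun x => cprob μ F A x / cprob μ F B x)) μ :=
    (Integrable.of_bound (hr.mono hF).aestronglyMeasurable 1 hr1).indicator hB
  symm
  refine ae_eq_condExp_of_forall_setIntegral_eq hG (integrable_ind hA)
    (fun s _ _ => hIntg.integrableOn) ?_ ((hr.mono hFG).indicator hBG).aestronglyMeasurable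
  intro s hs _
  obtain ⟨s', hs', hss⟩ := hrep s hs
  have e1 : ∫ x in s, B.indicator (fun x => cprob μ F A x / cprob μ F B x) x ∂μ
      = ∫ x, (s'.indicator (fun x => cprob μ F A x / cprob μ F B x)) x
          * B.indicator (fun _ => (1 : ℝ)) x ∂μ := by
    rw [← integral_indicator (hG s hs)]
    congr 1; ext x
    have := Set.ext_iff.1 hss x
    simp only [mem_inter_iff] at this
    by_cases hxB : x ∈ B <;> by_cases hxs : x ∈ s <;> by_cases hxs' : x ∈ s' <;>
      simp_all
  have e2 : ∫ x in s, A.indicator (fun _ => (1 : ℝ)) x ∂μ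
      = ∫ x, (s'.indicator (fun _ => (1 : ℝ))) x * A.indicator (fun _ => (1 : ℝ)) x ∂μ := by
    rw [← integral_indicator (hG s hs)]
    congr 1; ext x
    have := Set.ext_iff.1 hss x
    simp only [mem_inter_iff] at this
    have := @hAB x
    by_cases hxA : x ∈ A <;> by_cases hxs : x ∈ s <;> by_cases hxs' : x ∈ s' <;>
      simp_all
  rw [e1, e2, integral_mul_cprob hF (hr.indicator hs') (C := 1) _ hB,
    integral_mul_cprob hF (stronglyMeasurable_const.indicator hs') (C := 1) _ hA]
  · refine integral_congr_ae ?_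
    filter_upwards [cprob_nonneg (μ := μ) F A, cprob_nonneg (μ := μ) F B,
      cprob_mono (μ := μ) (F := F) hA hB hAB] with x h1 h2 h3
    by_cases hx : x ∈ s'
    · simp only [hx, indicator_of_mem, one_mul]
      by_cases hb : cprob μ F B x = 0
      · rw [hb] at h3 ⊢; rw [le_antisymm h3 h1]; simp
      · field_simp
    · simp [hx]
  · refine Eventually.of_forall fun x => ?_
    by_cases hx : x ∈ s' <;> simp [hx]
  · filter_upwards [hr1] with x hx
    by_cases hxs : x ∈ s'
    · simpa [hxs] using hx
    · simp [hxs]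

lemma cprob_sum {J : Type*} [Fintype J] {A : J → Set X} (hA : ∀ j, MeasurableSet (A j))
    (hd : Pairwise fun i j => Disjoint (A i) (A j)) :
    cprob μ F (⋃ j, A j) =ᵐ[μ] fun x => ∑ j, cprob μ F (A j) x := by
  have h := condExp_finsetSum (μ := μ) (s := Finset.univ)
    (f := fun j => (A j).indicator (fun _ => (1 : ℝ))) (fun j _ => integrable_ind (hA j)) F
  have e : (⋃ j, A j).indicator (fun _ => (1 : ℝ))
      = ∑ j, (A j).indicator (fun _ => (1 : ℝ)) := by
    ext x
    rw [Finset.sum_apply]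
    by_cases hx : ∃ j, x ∈ A j
    · obtain ⟨j, hj⟩ := hx
      rw [indicator_of_mem (mem_iUnion.2 ⟨j, hj⟩), Finset.sum_eq_single j]
      · simp [hj]
      · intro k _ hk
        exact indicator_of_notMem (fun h' => (hd hk).le_bot ⟨h', hj⟩) _
      · simp
    · push Not at hx
      rw [indicator_of_notMem (by simpa using hx)]
      exact (Finset.sum_eq_zero fun j _ => indicator_of_notMem (hx j) _).symm
  unfold cprob
  rw [e]
  filter_upwards [h] with x hx
  rw [hx, Finset.sum_apply]

lemma FM.prod {p : X → ι} {q : X → κ} (hp : FM p) (hq : FM q) : FM (fun x => (p x, q x)) := by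
  intro s
  have : (fun x => (p x, q x)) ⁻¹' s = ⋃ t ∈ s, p ⁻¹' {t.1} ∩ q ⁻¹' {t.2} := by
    ext x; simp
  rw [this]
  exact MeasurableSet.biUnion (Set.to_countable s) fun t _ => (hp _).inter (hq _)

lemma chain_rule_aux (hF : F ≤ m0) {p : X → ι} {q : X → κ} (hp : FM p) (hq : FM q)
    (hGdef : G = F ⊔ MeasurableSpace.comap q ⊤) :
    condPartEntropy μ F (fun x => (p x, q x)) =
      condPartEntropy μ F q + condPartEntropy μ G p := by
  have hG : G ≤ m0 := hGdef ▸ sup_le hF hq.le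
  have hFG : F ≤ G := hGdef ▸ le_sup_left
  have hqG : MeasurableSpace.comap q ⊤ ≤ G := hGdef ▸ le_sup_right
  set B : κ → Set X := fun j => q ⁻¹' {j} with hBdef
  set A : ι → κ → Set X := fun i j => p ⁻¹' {i} ∩ q ⁻¹' {j} with hAdef
  have hB : ∀ j, MeasurableSet (B j) := fun j => hq _
  have hBG : ∀ j, MeasurableSet[G] (B j) := fun j =>
    hqG _ ⟨{j}, trivial, rfl⟩
  have hA : ∀ i j, MeasurableSet (A i j) := fun i j => (hp _).inter (hq _)
  have hAB : ∀ i j, A i j ⊆ B j := fun i j => inter_subset_right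
  -- facts
  have f1 : ∀ i j, cprob μ G (A i j) =ᵐ[μ]
      (B j).indicator (fun x => cprob μ F (A i j) x / cprob μ F (B j) x) := fun i j =>
    cond_ratio hF (hA i j) (hB j) (hAB i j) hG hFG (hBG j)
      (fun s hs => sup_comap_repr (hGdef ▸ hs) j)
  have f2 : ∀ i j, cprob μ G (A i j) =ᵐ[μ] (B j).indicator (cprob μ G (p ⁻¹' {i})) := by
    intro i j
    have := condExp_indicator (integrable_ind (μ := μ) (hp {i})) (hBG j)
    rw [indicator_indicator, inter_comm] at this
    exact this
  have f3 : ∀ j, cprob μ F (B j) =ᵐ[μ] fun x => ∑ i, cprob μ F (A i j) x := by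
    intro j
    have := cprob_sum (μ := μ) (F := F) (A := fun i => A i j) (fun i => hA i j) (by
      intro i i' hii
      refine Set.disjoint_left.2 fun x hx hx' => hii ?_
      exact (hx.1 : p x = i).symm.trans hx'.1)
    have e : (⋃ i, A i j) = B j := by
      ext x; simp [A, B]
    rwa [e] at this
  have hbd : ∀ i j, ∀ᵐ x ∂μ, 0 ≤ cprob μ F (A i j) x / cprob μ F (B j) x ∧
      cprob μ F (A i j) x / cprob μ F (B j) x ≤ 1 := by
    intro i j
    filter_upwards [cprob_nonneg (μ := μ) F (A i j), cprob_nonneg (μ := μ) F (B j),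
      cprob_mono (μ := μ) (F := F) (hA i j) (hB j) (hAB i j)] with x h1 h2 h3
    exact ⟨by positivity, div_le_one_of_le₀ h3 h2⟩
  have hrm : ∀ i j, StronglyMeasurable[F]
      (fun x => Real.negMulLog (cprob μ F (A i j) x / cprob μ F (B j) x)) := fun i j =>
    Real.continuous_negMulLog.comp_stronglyMeasurable
      ((cprob_sm F _).measurable.div (cprob_sm F _).measurable).stronglyMeasurable
  have hrb : ∀ i j, ∀ᵐ x ∂μ,
      ‖Real.negMulLog (cprob μ F (A i j) x / cprob μ F (B j) x)‖ ≤ 1 := by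
    intro i j
    filter_upwards [hbd i j] with x hx
    have := negMulLog_unit hx.1 hx.2
    rw [Real.norm_eq_abs, abs_of_nonneg this.1]; exact this.2
  have hri : ∀ i j, Integrable
      (fun x => Real.negMulLog (cprob μ F (A i j) x / cprob μ F (B j) x)) μ := fun i j =>
    Integrable.of_bound ((hrm i j).mono hF).aestronglyMeasurable 1 (hrb i j)
  have hbi : ∀ i j, Integrable (fun x =>
      Real.negMulLog (cprob μ F (A i j) x / cprob μ F (B j) x) * cprob μ F (B j) x) μ := by
    intro i j
    exact Integrable.bdd_mul (c := 1) (integrable_condExp (m := F))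
      ((hrm i j).mono hF).aestronglyMeasurable (hrb i j)
  have g1 : ∀ i, ∫ x, Real.negMulLog (cprob μ G (p ⁻¹' {i}) x) ∂μ = ∑ j, ∫ x,
      Real.negMulLog (cprob μ F (A i j) x / cprob μ F (B j) x) * cprob μ F (B j) x ∂μ := by
    intro i
    have : ∀ᵐ x ∂μ, Real.negMulLog (cprob μ G (p ⁻¹' {i}) x) = ∑ j,
        Real.negMulLog (cprob μ F (A i j) x / cprob μ F (B j) x)
          * (B j).indicator (fun _ => (1 : ℝ)) x := by
      filter_upwards [ae_all_iff.2 (f1 i), ae_all_iff.2 (f2 i)] with x h1 h2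
      rw [Finset.sum_eq_single (q x)]
      · have hx : x ∈ B (q x) := rfl
        have := (h2 (q x)).symm.trans (h1 (q x))
        rw [indicator_of_mem hx, indicator_of_mem hx] at this
        rw [indicator_of_mem hx, this, mul_one]
      · intro j _ hj
        have hx : x ∉ B j := fun h => hj h.symm
        rw [indicator_of_notMem hx, mul_zero]
      · simp
    rw [integral_congr_ae this, integral_finsetSum]
    · exact Finset.sum_congr rfl fun j _ =>
        integral_mul_cprob hF (hrm i j) (hrb i j) (hB j)
    · intro j _
      exact Integrable.bdd_mul (c := 1) (integrable_ind (hB j))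
        ((hrm i j).mono hF).aestronglyMeasurable (hrb i j)
  have hpre : ∀ i j, (fun x => (p x, q x)) ⁻¹' {(i, j)} = A i j := by
    intro i j; ext x; simp [A, Prod.ext_iff]
  rw [cpe_def, cpe_def, cpe_def, Fintype.sum_prod_type_right]
  simp_rw [hpre, g1]
  rw [Finset.sum_comm (s := (Finset.univ : Finset ι)), ← Finset.sum_add_distrib]
  refine Finset.sum_congr rfl fun j _ => ?_
  rw [← integral_finsetSum _ fun i _ => hbi i j,
    ← integral_finsetSum _ fun i _ => integrable_nml_cprob hF (hA i j),
    ← integral_add (integrable_nml_cprob hF (hB j)) (integrable_finsetSum _ fun i _ => hbi i j)]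
  refine integral_congr_ae ?_
  filter_upwards [f3 j, ae_all_iff.2 fun i => cprob_nonneg (μ := μ) F (A i j)] with x h3 h0
  change ∑ i, Real.negMulLog (cprob μ F (A i j) x) = Real.negMulLog (cprob μ F (B j) x) + _
  by_cases hb : cprob μ F (B j) x = 0
  · have : ∀ i, cprob μ F (A i j) x = 0 := by
      intro i
      have := (Finset.sum_eq_zero_iff_of_nonneg fun i _ => h0 i).1 (h3.symm.trans hb) i
      exact this (Finset.mem_univ i)
    simp [this, hb]
  · have e : ∀ i, Real.negMulLog (cprob μ F (A i j) x) =
        cprob μ F (A i j) x / cprob μ F (B j) x * Real.negMulLog (cprob μ F (B j) x) +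
        Real.negMulLog (cprob μ F (A i j) x / cprob μ F (B j) x) * cprob μ F (B j) x := by
      intro i
      have := Real.negMulLog_mul (cprob μ F (B j) x)
        (cprob μ F (A i j) x / cprob μ F (B j) x)
      rw [mul_div_cancel₀ _ hb] at this
      rw [this]; ring
    simp_rw [e]
    rw [Finset.sum_add_distrib, ← Finset.sum_mul, ← Finset.sum_div, ← h3, div_self hb, one_mul]

lemma chain_rule (hF : F ≤ m0) {p : X → ι} {q : X → κ} (hp : FM p) (hq : FM q) :
    condPartEntropy μ F (fun x => (p x, q x)) =
      condPartEntropy μ F q + condPartEntropy μ (F ⊔ MeasurableSpace.comap q ⊤) p :=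
  chain_rule_aux hF hp hq rfl

/-- chain rule for a partition and a coarser one -/
lemma chain_factor (hF : F ≤ m0) {p : X → ι} {q : X → κ}
    (hp : FM p) (hq : FM q) (f : ι → κ) (hpq : ∀ x, q x = f (p x)) :
    condPartEntropy μ F p =
      condPartEntropy μ F q + condPartEntropy μ (F ⊔ MeasurableSpace.comap q ⊤) p := by
  have h1 : condPartEntropy μ F (fun x => (q x, p x)) = condPartEntropy μ F p := by
    rw [chain_rule hF hq hp, add_eq_left]
    refine cpe_eq_zero (sup_le hF hp.le) fun i => ⟨_, ?_, Filter.EventuallyEq.rfl⟩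
    refine (le_sup_right : _ ≤ F ⊔ MeasurableSpace.comap p ⊤) _ ⟨f ⁻¹' {i}, trivial, ?_⟩
    ext x; simp [hpq]
  rw [← chain_rule hF hp hq, ← h1,
    ← cpe_equiv F (fun x => (p x, q x)) (Equiv.prodComm _ _)]
  rfl

/-- more conditioning on a coarser partition loses at most as much entropy -/
lemma loss_le (hF : F ≤ m0) (hFG : F ≤ G) (hG : G ≤ m0) {p : X → ι} {q : X → κ}
    (hp : FM p) (hq : FM q) (f : ι → κ) (hpq : ∀ x, q x = f (p x)) :
    condPartEntropy μ F q - condPartEntropy μ G q ≤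
      condPartEntropy μ F p - condPartEntropy μ G p := by
  rw [chain_factor hF hp hq f hpq, chain_factor hG hp hq f hpq]
  have := cpe_anti (μ := μ) (sup_le_sup_right hFG (MeasurableSpace.comap q ⊤)) (sup_le hG hq.le) hp
  linarith

end ChainRule
section Dyn

variable {X : Type*}

/-- the σ-algebra generated by `p ∘ T^j`, `j ≥ n` -/
def tl (T : X → X) {ι : Type*} (p : X → ι) (n : ℕ) : MeasurableSpace X :=
  ⨆ j : ℕ, MeasurableSpace.comap (fun x => p (T^[j + n] x)) ⊤

/-- the block map -/
def blk (T : X → X) {ι : Type*} (p : X → ι) (n : ℕ) : X → (Fin n → ι) :=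
  fun x i => p (T^[(i : ℕ)] x)

lemma tl_one (T : X → X) {ι : Type*} (p : X → ι) : partPast T p = tl T p 1 := rfl

lemma tl_succ (T : X → X) {ι : Type*} (p : X → ι) (n : ℕ) :
    tl T p (n + 1) = (tl T p n).comap T := by
  unfold tl
  rw [MeasurableSpace.comap_iSup]
  refine iSup_congr fun j => ?_
  rw [MeasurableSpace.comap_comp]
  rfl

lemma comap_le_tl (T : X → X) {ι : Type*} (p : X → ι) {n j : ℕ} (h : n ≤ j) :
    MeasurableSpace.comap (fun x => p (T^[j] x)) ⊤ ≤ tl T p n := by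
  have := le_iSup (fun j : ℕ => MeasurableSpace.comap (fun x => p (T^[j + n] x)) ⊤) (j - n)
  simp only [Nat.sub_add_cancel h] at this
  exact this

lemma tl_anti (T : X → X) {ι : Type*} (p : X → ι) {m n : ℕ} (h : m ≤ n) :
    tl T p n ≤ tl T p m :=
  iSup_le fun j => comap_le_tl T p (by omega)

lemma comap_factor_le {ι κ : Type*} (p : X → ι) (f : ι → κ) :
    MeasurableSpace.comap (fun x => f (p x)) ⊤ ≤ MeasurableSpace.comap p ⊤ := by
  rintro _ ⟨s, -, rfl⟩; exact ⟨f ⁻¹' s, trivial, rfl⟩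

lemma tl_factor_le (T : X → X) {ι κ : Type*} (p : X → ι) (f : ι → κ) (n : ℕ) :
    tl T (fun x => f (p x)) n ≤ tl T p n :=
  iSup_mono fun j => comap_factor_le (fun x => p (T^[j + n] x)) f

lemma comap_blk_le {ι : Type*} [Fintype ι] (T : X → X) (p : X → ι) (n : ℕ) :
    MeasurableSpace.comap (blk T p n) ⊤ ≤ tl T p 0 := by
  rintro _ ⟨s, -, rfl⟩
  have : blk T p n ⁻¹' s = ⋃ t ∈ s, ⋂ i : Fin n, (fun x => p (T^[(i : ℕ)] x)) ⁻¹' {t i} := by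
    ext x
    simp only [mem_preimage, mem_iUnion, mem_iInter, mem_singleton_iff, exists_prop]
    constructor
    · intro h; exact ⟨_, h, fun i => rfl⟩
    · rintro ⟨t, ht, h⟩
      have : blk T p n x = t := funext h
      rwa [this]
  rw [this]
  refine MeasurableSet.biUnion (Set.to_countable s) fun t _ => MeasurableSet.iInter fun i => ?_
  exact comap_le_tl T p (Nat.zero_le (i : ℕ)) _ ⟨{t i}, trivial, rfl⟩

lemma comap_blkT_le {ι : Type*} [Fintype ι] (T : X → X) (p : X → ι) (n : ℕ) :
    MeasurableSpace.comap (fun x => blk T p n (T x)) ⊤ ≤ tl T p 1 := by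
  rw [tl_succ]
  have := MeasurableSpace.comap_mono (g := T) (comap_blk_le T p n)
  rw [MeasurableSpace.comap_comp] at this
  exact this

lemma le_comap_blkT {ι : Type*} (T : X → X) (p : X → ι) {n j : ℕ} (h : j < n) :
    MeasurableSpace.comap (fun x => p (T^[j + 1] x)) ⊤ ≤
      MeasurableSpace.comap (fun x => blk T p n (T x)) ⊤ :=
  comap_factor_le (fun x => blk T p n (T x)) (fun t => t ⟨j, h⟩)

lemma tl_one_le {ι : Type*} (T : X → X) (p : X → ι) (n : ℕ) :
    tl T p 1 ≤ tl T p (n + 1) ⊔ MeasurableSpace.comap (fun x => blk T p n (T x)) ⊤ := by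
  refine iSup_le fun j => ?_
  by_cases h : j < n
  · exact (le_comap_blkT T p h).trans le_sup_right
  · exact (comap_le_tl T p (by omega)).trans le_sup_left

lemma comap_blkT_mono {ι : Type*} (T : X → X) (p : X → ι) :
    Monotone fun n => MeasurableSpace.comap (fun x => blk T p n (T x)) ⊤ := by
  intro m n h
  exact comap_factor_le (fun x => blk T p n (T x))
    (fun t => fun i : Fin m => t ⟨i, i.2.trans_le h⟩)

lemma iSup_comap_blkT {ι : Type*} [Fintype ι] (T : X → X) (p : X → ι) :
    ⨆ n, MeasurableSpace.comap (fun x => blk T p n (T x)) ⊤ = tl T p 1 := by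
  refine le_antisymm (iSup_le fun n => comap_blkT_le T p n) (iSup_le fun j => ?_)
  exact (le_comap_blkT T p (Nat.lt_succ_self j)).trans
    (le_iSup (fun n => MeasurableSpace.comap (fun x => blk T p n (T x)) ⊤) (j + 1))

variable {F G : MeasurableSpace X} [m0 : MeasurableSpace X] {μ : Measure X}
  [IsProbabilityMeasure μ]
variable {ι κ : Type*} [Fintype ι] [Fintype κ] {T : X → X}

lemma FM.comp {p : X → ι} (hp : FM p) (hT : Measurable T) (n : ℕ) :
    FM (fun x => p (T^[n] x)) := fun s => (hT.iterate n) (hp s)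

lemma tl_le (hT : Measurable T) {p : X → ι} (hp : FM p) (n : ℕ) : tl T p n ≤ m0 :=
  iSup_le fun j => (hp.comp hT (j + n)).le

lemma FM.blk (hT : Measurable T) {p : X → ι} (hp : FM p) (n : ℕ) : FM (blk T p n) :=
  fun s => tl_le hT hp 0 _ (comap_blk_le T p n _ ⟨s, trivial, rfl⟩)

lemma blk_step (hT : MeasurePreserving T μ μ) (hF : F ≤ m0) {p : X → ι} (hp : FM p) (n : ℕ) :
    condPartEntropy μ (F.comap T) (blk T p (n + 1)) = condPartEntropy μ F (blk T p n) +
      condPartEntropy μ (F.comap T ⊔ MeasurableSpace.comap (fun x => blk T p n (T x)) ⊤) p := by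
  have hFT : F.comap T ≤ m0 := by
    rintro _ ⟨s, hs, rfl⟩; exact hT.measurable (hF s hs)
  have hb : FM (blk T p n) := hp.blk hT.measurable n
  have hbT : FM (fun x => blk T p n (T x)) := fun s => hT.measurable (hb s)
  rw [← cpe_comap hT hF hb, ← chain_rule hFT hp hbT,
    ← cpe_equiv _ (fun x => (p x, blk T p n (T x))) (Fin.consEquiv fun _ => ι)]
  congr 1
  ext x i
  refine Fin.cases ?_ (fun i => ?_) i
  · rfl
  · rfl

lemma blk_zero (hF : F ≤ m0) (p : X → ι) : condPartEntropy μ F (blk T p 0) = 0 := by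
  refine cpe_eq_zero hF fun i => ⟨univ, MeasurableSet.univ, ?_⟩
  have : blk T p 0 ⁻¹' {i} = univ := by
    ext x; simpa using Subsingleton.elim _ _
  exact this ▸ Filter.EventuallyEq.rfl

lemma exists_small_loss (hT : MeasurePreserving T μ μ) {p : X → ι} {r : X → κ} (f : κ → ι)
    (hpr : ∀ x, p x = f (r x)) (hp : FM p) (hr : FM r) {ε : ℝ} (hε : 0 < ε) :
    ∃ m, condPartEntropy μ (tl T p 1) p - ε <
      condPartEntropy μ (tl T p 1 ⊔ tl T r (m + 1)) p := by
  by_contra! hcon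
  have hTm := hT.measurable
  have htp := tl_le hTm hp
  have htr := tl_le hTm hr
  set hP := condPartEntropy μ (tl T p 1) p
  set hR := condPartEntropy μ (tl T r 1) r
  have hbTp : ∀ n, FM (fun x => blk T p n (T x)) := fun n s => hTm (hp.blk hTm n s)
  have hbTr : ∀ n, FM (fun x => blk T r n (T x)) := fun n s => hTm (hr.blk hTm n s)
  -- lower bound for the big partition
  have a1 : ∀ n : ℕ, n * hR ≤ condPartEntropy μ (tl T r n) (blk T r n) := by
    intro n
    induction n with
    | zero => simp [blk_zero (htr 0)]
    | succ n ih =>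
      rw [tl_succ, blk_step hT (htr n) hr, ← tl_succ]
      have : hR ≤ condPartEntropy μ
          (tl T r (n + 1) ⊔ MeasurableSpace.comap (fun x => blk T r n (T x)) ⊤) r :=
        cpe_anti (sup_le (tl_anti T r (by omega)) (comap_blkT_le T r n)) (htr 1) hr
      push_cast; linarith
  have a2 : ∀ n : ℕ, condPartEntropy μ (tl T r n) (blk T p n) ≤ n * (hP - ε) := by
    intro n
    induction n with
    | zero => simp [blk_zero (htr 0)]
    | succ n ih =>
      rw [tl_succ, blk_step hT (htr n) hp, ← tl_succ]
      have h1 : condPartEntropy μ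
          (tl T r (n + 1) ⊔ MeasurableSpace.comap (fun x => blk T p n (T x)) ⊤) p ≤
          condPartEntropy μ (tl T p 1 ⊔ tl T r (n + 1)) p := by
        refine cpe_anti (sup_le ?_ le_sup_left) (sup_le (htr _) (hbTp n).le) hp
        refine (tl_one_le T p n).trans (sup_le_sup_right ?_ _)
        have := tl_factor_le T r f (n + 1)
        rwa [← funext hpr] at this
      have h2 := hcon n
      push_cast; linarith
  have a3 : ∀ n : ℕ, n * hP ≤ condPartEntropy μ ⊥ (blk T p n) := by
    intro n
    induction n with
    | zero => simp [blk_zero (bot_le : ⊥ ≤ m0)]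
    | succ n ih =>
      rw [← MeasurableSpace.comap_bot (g := T), blk_step hT bot_le hp, MeasurableSpace.comap_bot]
      have : hP ≤ condPartEntropy μ
          (⊥ ⊔ MeasurableSpace.comap (fun x => blk T p n (T x)) ⊤) p :=
        cpe_anti (sup_le bot_le (comap_blkT_le T p n)) (htp 1) hp
      push_cast; linarith
  let c : ℕ → ℝ := fun n => condPartEntropy μ (MeasurableSpace.comap (fun x => blk T r n (T x)) ⊤) r
  have a4 : ∀ n : ℕ, condPartEntropy μ ⊥ (blk T r n) = ∑ i ∈ Finset.range n, c i := by
    intro n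
    induction n with
    | zero => simp [blk_zero (bot_le : ⊥ ≤ m0)]
    | succ n ih =>
      rw [← MeasurableSpace.comap_bot (g := T), blk_step hT bot_le hr, MeasurableSpace.comap_bot,
        Finset.sum_range_succ, ih, bot_sup_eq]
  have a5 : Tendsto c atTop (𝓝 hR) := by
    have := cpe_tendsto (μ := μ) (comap_blkT_mono T r) (fun n => (hbTr n).le) hr
    rwa [iSup_comap_blkT] at this
  have a6 : ∀ n : ℕ, n * (hR + ε) ≤ ∑ i ∈ Finset.range n, c i := by
    intro n
    have hbp : FM (blk T p n) := hp.blk hTm n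
    have hbr : FM (blk T r n) := hr.blk hTm n
    have hfac : ∀ x, blk T p n x = (fun t : Fin n → κ => fun i => f (t i)) (blk T r n x) :=
      fun x => funext fun i => hpr _
    have e1 := chain_factor (μ := μ) (htr n) hbr hbp (fun t : Fin n → κ => fun i => f (t i)) hfac
    have e2 := chain_factor (μ := μ) (bot_le : ⊥ ≤ m0) hbr hbp (fun t : Fin n → κ => fun i => f (t i)) hfac
    have e3 : condPartEntropy μ (tl T r n ⊔ MeasurableSpace.comap (blk T p n) ⊤) (blk T r n) ≤
        condPartEntropy μ (⊥ ⊔ MeasurableSpace.comap (blk T p n) ⊤) (blk T r n) :=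
      cpe_anti (sup_le_sup_right bot_le _) (sup_le (htr n) hbp.le) hbr
    rw [← a4]
    have := a1 n
    have := a2 n
    have := a3 n
    linarith
  have a7 := a5.cesaro
  have : hR + ε ≤ hR := by
    refine ge_of_tendsto a7 (eventually_atTop.2 ⟨1, fun n hn => ?_⟩)
    have hn' : (0 : ℝ) < n := by exact_mod_cast hn
    have := a6 n
    rw [inv_mul_eq_div, le_div_iff₀ hn']
    linarith
  linarith

/-- a finite partition refining `p0` -/
structure PSt (p0 : X → ι) where
  k : ℕ
  P : X → Fin k
  hP : FM P
  f : Fin k → ι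
  hf : ∀ x, p0 x = f (P x)

lemma exists_step (hT : MeasurePreserving T μ μ) {p0 : X → ι} (hp0 : FM p0) (s : PSt p0)
    {l : ℕ} (q : X → Fin l) (hq : FM q) {ε : ℝ} (hε : 0 < ε) :
    ∃ s' : PSt p0, (∃ g : Fin s'.k → Fin s.k, ∀ x, s.P x = g (s'.P x)) ∧
      (∃ m, ∃ g : Fin s'.k → Fin l, ∀ x, q (T^[m] x) = g (s'.P x)) ∧
      condPartEntropy μ (partPast T s.P) p0 - ε ≤ condPartEntropy μ (partPast T s'.P) p0 := by
  have hTm := hT.measurable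
  obtain ⟨m, hm⟩ := exists_small_loss (μ := μ) hT (p := s.P) (r := fun x => (s.P x, q x)) Prod.fst
    (fun x => rfl) s.hP (s.hP.prod hq) hε
  let e := Fintype.equivFin (Fin s.k × Fin l)
  let P' : X → Fin (Fintype.card (Fin s.k × Fin l)) := fun x => e (s.P x, q (T^[m] x))
  have hP' : FM P' := fun t => (s.hP.prod (hq.comp hTm m)) (e ⁻¹' t)
  have h1 : ∀ x, s.P x = (e.symm (P' x)).1 := fun x => by simp [P']
  have h2 : ∀ x, q (T^[m] x) = (e.symm (P' x)).2 := fun x => by simp [P']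
  refine ⟨⟨_, P', hP', fun t => s.f (e.symm t).1, fun x => by rw [s.hf, h1]⟩,
    ⟨fun t => (e.symm t).1, h1⟩, ⟨m, fun t => (e.symm t).2, h2⟩, ?_⟩
  change _ ≤ condPartEntropy μ (tl T P' 1) p0
  change condPartEntropy μ (tl T s.P 1) p0 - ε ≤ _
  have hle : tl T P' 1 ≤ tl T s.P 1 ⊔ tl T (fun x => (s.P x, q x)) (m + 1) := by
    refine iSup_le fun j => ?_
    rintro _ ⟨t, -, rfl⟩
    have : (fun x => P' (T^[j + 1] x)) ⁻¹' t = ⋃ u ∈ (e ⁻¹' t),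
        (fun x => s.P (T^[j + 1] x)) ⁻¹' {u.1} ∩
        (fun x => (fun y => (s.P y, q y)) (T^[j + (m + 1)] x)) ⁻¹' {w | w.2 = u.2} := by
      ext x
      have hit : T^[m] (T^[j + 1] x) = T^[j + (m + 1)] x := by
        rw [← Function.iterate_add_apply, show m + (j + 1) = j + (m + 1) by omega]
      simp only [P', mem_preimage, mem_iUnion, mem_inter_iff, mem_singleton_iff, mem_ofPred_eq,
        exists_prop, hit]
      constructor
      · intro h; exact ⟨_, h, rfl, rfl⟩
      · rintro ⟨u, hu, h1, h2⟩; rw [h1, h2]; exact hu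
    rw [this]
    refine MeasurableSet.biUnion (Set.to_countable _) fun u _ => ?_
    refine @MeasurableSet.inter _ (_) _ _ ?_ ?_
    · exact (le_sup_left : tl T s.P 1 ≤ _) _ (comap_le_tl T s.P (by omega) _ ⟨{u.1}, trivial, rfl⟩)
    · exact (le_sup_right : tl T (fun x => (s.P x, q x)) (m + 1) ≤ _) _
        (comap_le_tl T (fun x => (s.P x, q x)) (by omega) _ ⟨_, trivial, rfl⟩)
  have hle1 : tl T s.P 1 ≤ tl T P' 1 := by
    have := tl_factor_le T P' (fun t => (e.symm t).1) 1
    rwa [← funext h1] at this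
  have hP'1 := tl_le hTm hP' 1
  have b1 := cpe_anti (μ := μ) hle (sup_le (tl_le hTm s.hP 1) (tl_le hTm (s.hP.prod hq) _)) s.hP
  have b2 := loss_le (μ := μ) (tl_le hTm s.hP 1) hle1 hP'1 s.hP hp0 s.f s.hf
  linarith

end Dyn
section Final

lemma exists_seq {X : Type*} [m0 : MeasurableSpace X] {μ : Measure X}
    [IsProbabilityMeasure μ] {T : X → X} (hT : MeasurePreserving T μ μ)
    {k : ℕ} {p0 : X → Fin k} (hp0 : FM p0) (hpos : 0 < partKS μ T p0)
    (l : ℕ → ℕ) (q : ∀ n, X → Fin (l n)) (hq : ∀ n, FM (q n)) :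
    ∃ s : ℕ → PSt p0, (Monotone fun n => partPast T (s n).P) ∧
      (∀ n, ∃ m, ∃ g : Fin (s (n + 1)).k → Fin (l n), ∀ x, q n (T^[m] x) = g ((s (n + 1)).P x)) ∧
      0 < condPartEntropy μ (⨆ n, partPast T (s n).P) p0 := by
  set h := partKS μ T p0 with hh
  have hε : ∀ n : ℕ, 0 < h / 2 ^ (n + 2) := fun n => by positivity
  choose st hst1 hst2 hst3 using fun (n : ℕ) (s : PSt p0) =>
    exists_step (μ := μ) hT hp0 s (q n) (hq n) (hε n)
  let s : ℕ → PSt p0 := fun n => Nat.rec ⟨k, p0, hp0, id, fun _ => rfl⟩ (fun n s => st n s) n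
  have hs : ∀ n, s (n + 1) = st n (s n) := fun n => rfl
  have hmono : Monotone fun n => partPast T (s n).P := by
    refine monotone_nat_of_le_succ fun n => ?_
    obtain ⟨g, hg⟩ := hst1 n (s n)
    have := tl_factor_le T (s (n + 1)).P g 1
    rwa [← funext hg] at this
  refine ⟨s, hmono, fun n => hst2 n (s n), ?_⟩
  have hlow : ∀ n, h / 2 + h / 2 ^ (n + 1) ≤ condPartEntropy μ (partPast T (s n).P) p0 := by
    intro n
    induction n with
    | zero =>
      have : condPartEntropy μ (partPast T (s 0).P) p0 = h := rfl
      rw [this]; simp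
    | succ n ih =>
      have := hst3 n (s n)
      rw [hs]
      have e : h / 2 ^ (n + 1) = 2 * (h / 2 ^ (n + 2)) := by
        rw [pow_succ 2 (n + 1)]; field_simp
      have : h / 2 ^ (n + 1 + 1) = h / 2 ^ (n + 2) := rfl
      linarith
  have ht := cpe_tendsto (μ := μ) hmono (fun n => tl_le hT.measurable (s n).hP 1) hp0
  have : h / 2 ≤ condPartEntropy μ (⨆ n, partPast T (s n).P) p0 := by
    refine ge_of_tendsto ht (Eventually.of_forall fun n => ?_)
    have := hlow n
    have : 0 < h / 2 ^ (n + 1) := by positivity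
    linarith
  linarith [half_pos hpos]

lemma exists_fine_partition {X : Type*} [MetricSpace X] [CompactSpace X] [MeasurableSpace X]
    [BorelSpace X] {ε : ℝ} (hε : 0 < ε) :
    ∃ (l : ℕ) (q : X → Fin l), FM q ∧ ∀ x y, q x = q y → dist x y < ε := by
  obtain ⟨t, htf, ht⟩ := Metric.totallyBounded_iff.1
    (isCompact_univ : IsCompact (univ : Set X)).totallyBounded (ε / 2) (half_pos hε)
  obtain ⟨n, c, rfl⟩ := htf.fin_embedding
  have hx : ∀ x : X, ∃ i : Fin n, x ∈ Metric.ball (c i) (ε / 2) := by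
    intro x
    have := ht (mem_univ x)
    simpa using this
  refine ⟨2 ^ n, fun x => (finFunctionFinEquiv (m := 2) (n := n))
    fun i => if x ∈ Metric.ball (c i) (ε / 2) then 1 else 0, ?_, ?_⟩
  · have hm : ∀ i, MeasurableSet (Metric.ball (c i) (ε / 2)) := fun i => Metric.isOpen_ball.measurableSet
    have : Measurable fun (x : X) (i : Fin n) =>
        (if x ∈ Metric.ball (c i) (ε / 2) then (1 : Fin 2) else 0) :=
      measurable_pi_lambda _ fun i => Measurable.ite (hm i) measurable_const measurable_const
    intro s
    exact this (Set.to_countable (finFunctionFinEquiv ⁻¹' s)).measurableSet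
  · intro x y hxy
    have hxy := finFunctionFinEquiv.injective hxy
    obtain ⟨i, hi⟩ := hx x
    have := congrFun hxy i
    simp only [hi, if_true] at this
    have hy : y ∈ Metric.ball (c i) (ε / 2) := by
      by_contra hy
      simp [hy] at this
    have := dist_triangle_right x y (c i)
    rw [Metric.mem_ball] at hi hy
    linarith

lemma zero_one {X : Type*} [MetricSpace X] [CompactSpace X] [MeasurableSpace X]
    [BorelSpace X] {T : X → X} (hcont : Continuous T) {μ : Measure X} [IsProbabilityMeasure μ]
    (herg : Ergodic T μ) {C : Set X} (hinv : ∀ x ∈ C, T x ∈ C) (hinj : InjOn T C)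
    {E : Set X} (hE : MeasurableSet E) (hEC : E ⊆ C) (hEpos : μ E ≠ 0) :
    ∃ W, MeasurableSet W ∧ W ⊆ C ∧ μ Wᶜ = 0 := by
  have hitC : ∀ n, ∀ x ∈ C, T^[n] x ∈ C := by
    intro n
    induction n with
    | zero => exact fun x hx => hx
    | succ n ih => exact fun x hx => ih _ (hinv x hx)
  have hitinj : ∀ n, InjOn T^[n] C := by
    intro n
    induction n with
    | zero => exact fun x _ y _ h => h
    | succ n ih =>
      intro x hx y hy h
      exact hinj hx hy (ih (hinv x hx) (hinv y hy) h)
  set W := ⋃ n, T^[n] '' E with hW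
  have hWm : MeasurableSet W := MeasurableSet.iUnion fun n =>
    hE.image_of_measurable_injOn (hcont.iterate n).measurable ((hitinj n).mono hEC)
  have hWC : W ⊆ C := by
    refine iUnion_subset fun n => ?_
    rintro _ ⟨x, hx, rfl⟩; exact hitC n x (hEC hx)
  have hWT : W ⊆ T ⁻¹' W := by
    refine iUnion_subset fun n => ?_
    rintro _ ⟨x, hx, rfl⟩
    exact mem_iUnion.2 ⟨n + 1, x, hx, Function.iterate_succ_apply' T n x⟩
  have hEW : E ⊆ W := fun x hx => mem_iUnion.2 ⟨0, x, hx, rfl⟩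
  refine ⟨W, hWm, hWC, ?_⟩
  have hae : T ⁻¹' W =ᵐ[μ] W :=
    (ae_eq_of_subset_of_measure_ge hWT
      (herg.toMeasurePreserving.measure_preimage hWm.nullMeasurableSet).le
      hWm.nullMeasurableSet (measure_ne_top _ _)).symm
  rcases herg.quasiErgodic.ae_empty_or_univ₀ hWm.nullMeasurableSet hae with h | h
  · exact absurd (measure_mono_null hEW (ae_eq_empty.1 h)) hEpos
  · exact ae_eq_univ.1 h

end Final

/-- Non-invertible case: if `T` is a continuous surjection of a compact
metric space and `μ` is a `T`-ergodic Borel probability measure with `h_μ(X,T) > 0`,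
then the set of points belonging to a proper asymptotic pair has `μ`-measure `1`. -/
theorem positive_entropy_asymptotic_pairs_noninvertible
    {X : Type*} [MetricSpace X] [CompactSpace X] [MeasurableSpace X] [BorelSpace X]
    (T : X → X) (hcont : Continuous T) (hsurj : Function.Surjective T)
    (μ : Measure X) [IsProbabilityMeasure μ] (herg : Ergodic T μ)
    (hpos : 0 < ksEntropy μ T) :
    μ {x : X | ∃ y : X, y ≠ x ∧ IsAsymptoticPair T x y} = 1 := by
  by_contra hne
  have hTm : Measurable T := hcont.measurable
  have hT := herg.toMeasurePreserving
  set S := {x : X | ∃ y : X, y ≠ x ∧ IsAsymptoticPair T x y} with hS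
  -- asymptotic pairs pull back along `T`
  have hpull : ∀ x, T x ∈ S → x ∈ S := by
    rintro x ⟨y, hy, hxy⟩
    obtain ⟨z, rfl⟩ := hsurj y
    refine ⟨z, fun h => hy (h ▸ rfl), ?_⟩
    exact (tendsto_add_atTop_iff_nat 1).1 hxy
  have hinj : InjOn T Sᶜ := by
    intro x hx y _ h
    by_contra hxy
    refine hx ⟨y, fun h => hxy h.symm, ?_⟩
    refine (tendsto_add_atTop_iff_nat 1).1 ?_
    simp only [Function.iterate_succ_apply, h, dist_self]
    exact tendsto_const_nhds
  obtain ⟨W, hWm, hWS, hW0⟩ := zero_one hcont herg (C := Sᶜ) (fun x hx h => hx (hpull x h)) hinj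
    (measurableSet_toMeasurable μ S).compl (compl_subset_compl.2 (subset_toMeasurable μ S))
    (by
      intro h
      rw [prob_compl_eq_zero_iff (measurableSet_toMeasurable μ S), measure_toMeasurable] at h
      exact hne h)
  -- a partition of positive entropy
  obtain ⟨k, p0, hp0m, hp0⟩ : ∃ (k : ℕ) (p : X → Fin k) (_ : Measurable p), 0 < partKS μ T p := by
    by_contra! hcon
    refine hpos.ne' ?_
    unfold ksEntropy
    simp only [ENNReal.iSup_eq_zero, ENNReal.ofReal_eq_zero]
    exact hcon
  have hp0F : FM p0 := fun s => hp0m trivial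
  choose l q hq hqd using fun n : ℕ =>
    exists_fine_partition (X := X) (ε := 1 / ((n : ℝ) + 1)) (by positivity)
  obtain ⟨s, hmono, hsq, hent⟩ := exists_seq (μ := μ) hT hp0F hp0 l q hq
  have hFle : (⨆ n, partPast T (s n).P) ≤ (inferInstance : MeasurableSpace X) :=
    iSup_le fun n => tl_le hTm (s n).hP 1
  -- the coding map
  let π : X → ((n : ℕ) → ℕ → Fin (s n).k) := fun x n j => (s n).P (T^[j + 1] x)
  have hπF : Measurable[⨆ n, partPast T (s n).P] π := by
    refine @measurable_pi_lambda _ _ _ (_) _ _ fun n => ?_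
    refine @measurable_pi_lambda _ _ _ (_) _ _ fun j => ?_
    intro t _
    exact (le_iSup (fun n => partPast T (s n).P) n) _
      (comap_le_tl T (s n).P (by omega : 1 ≤ j + 1) _ ⟨t, trivial, rfl⟩)
  have hπ : Measurable π := hπF.mono hFle le_rfl
  have hπasym : ∀ x y, π x = π y → IsAsymptoticPair T x y := by
    intro x y hxy
    refine Metric.tendsto_atTop.2 fun ε hε => ?_
    obtain ⟨n, hn⟩ := exists_nat_one_div_lt hε
    obtain ⟨m, g, hg⟩ := hsq n
    refine ⟨m + 1, fun N hN => ?_⟩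
    obtain ⟨j, rfl⟩ : ∃ j, N = m + (j + 1) := ⟨N - (m + 1), by omega⟩
    have h1 : (s (n + 1)).P (T^[j + 1] x) = (s (n + 1)).P (T^[j + 1] y) :=
      congrFun (congrFun hxy (n + 1)) j
    have h2 : q n (T^[m + (j + 1)] x) = q n (T^[m + (j + 1)] y) := by
      rw [Function.iterate_add_apply T m (j + 1) x, Function.iterate_add_apply T m (j + 1) y, hg, hg, h1]
    have := hqd n _ _ h2
    rw [Real.dist_eq, sub_zero, abs_of_nonneg dist_nonneg]
    linarith
  have hπinj : InjOn π W := by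
    intro x hx y _ hxy
    by_contra hne'
    exact hWS hx ⟨y, fun h => hne' h.symm, hπasym x y hxy⟩
  refine hent.ne' (cpe_eq_zero hFle fun i => ?_)
  refine ⟨π ⁻¹' (π '' (p0 ⁻¹' {i} ∩ W)), hπF ?_, ?_⟩
  · exact ((hp0F {i}).inter hWm).image_of_measurable_injOn hπ (hπinj.mono inter_subset_right)
  · have hWae : ∀ᵐ x ∂μ, x ∈ W := hW0
    filter_upwards [hWae] with x hx
    refine propext ⟨fun h => ⟨x, ⟨h, hx⟩, rfl⟩, ?_⟩
    rintro ⟨y, ⟨hy, hyW⟩, hyx⟩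
    rwa [hπinj hyW hx hyx] at hy
end
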